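/- arXiv:2206.01391 — 3 statements merged into one kernel-verified Lean document; each statement's English description precedes it below -/
import Mathlib

section
/- Let x > 1 be a half-integer (x = m + 1/2 for some positive integer m) and let C = 1284699552/444215525. If P is any finite set of at most eight primes, each lying in the open interval (x, 3x/2), then ∑_{p ∈ P} 1/(p − x) ≤ C. (Since 1/(p−x) is decreasing in p, this is equivalent to the paper's statement that the sum over the smallest eight primes in (x, 3x/2) is at most C, and the bound C is sharp.) -/
/-!
Every prime exceeding `7` is coprime to `210 = 2 * 3 * 5 * 7`, and the pattern of such integers
after `x = n - 1 / 2` depends only on `n` modulo `210`. Since there are at most eight summands,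
their sum is at most `8 * τ` plus the total excess over `τ` of all admissible terms that exceed `τ`.
With `τ = 2 / 53` only the integers `n, …, n + 26` matter, so finitely many rational inequalities
remain. Equality holds for `n ≡ 11`, where the integers of this window coprime to `210` are
congruent to `11, 13, 17, 19, 23, 29, 31, 37`: there are exactly eight, and the last one contributes
`1 / (26 + 1 / 2) = τ`. For `x < 7` the interval `(x, 3 * x / 2)` contains at most one prime.
-/

open Finset

theorem sum_le_nsmul_add_sum_sub {ι M : Type*} [AddCommGroup M] [PartialOrder M]
    [IsOrderedAddMonoid M] {s t : Finset ι} {f : ι → M} {τ : M} {n : ℕ} (hτ : 0 ≤ τ)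
    (hcard : #s ≤ n) (ht : ∀ i ∈ t, τ ≤ f i) (hs : ∀ i ∈ s, i ∉ t → f i ≤ τ) :
    ∑ i ∈ s, f i ≤ n • τ + ∑ i ∈ t, (f i - τ) := by
  classical
  calc
    ∑ i ∈ s, f i = #s • τ + ∑ i ∈ s, (f i - τ) := by
      rw [sum_sub_distrib, sum_const, add_sub_cancel]
    _ ≤ n • τ + ∑ i ∈ t, (f i - τ) := by
      refine add_le_add (nsmul_le_nsmul_left hτ hcard) ?_
      calc
        ∑ i ∈ s, (f i - τ) = ∑ i ∈ s ∩ t, (f i - τ) + ∑ i ∈ s \ t, (f i - τ) :=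
          (sum_inter_add_sum_sdiff s t _).symm
        _ ≤ ∑ i ∈ s ∩ t, (f i - τ) :=
          add_le_of_nonpos_right <| sum_nonpos fun i hi ↦
            sub_nonpos.2 (hs i (mem_sdiff.1 hi).1 (mem_sdiff.1 hi).2)
        _ ≤ ∑ i ∈ t, (f i - τ) :=
          sum_le_sum_of_subset_of_nonneg inter_subset_right fun i hi _ ↦ sub_nonneg.2 (ht i hi)

/-- The total excess over `2 / 53` of the numbers `1 / (a - (n - 1 / 2))`, where `a` ranges over the
integers in `[n, n + 26]` coprime to `210`. It is rational and indexed by the offset `k = a - n`, so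
that it is decidably bounded and visibly periodic in `n`. -/
def windowExcess (n : ℕ) : ℚ :=
  ∑ k ∈ range 27 with Nat.Coprime 210 (n + k), (1 / (k + 1 / 2) - 2 / 53)

theorem windowExcess_periodic : Function.Periodic windowExcess 210 := fun n ↦ by
  simp only [windowExcess, add_right_comm n 210, Nat.periodic_coprime 210 _]

theorem windowExcess_le (n : ℕ) : windowExcess n ≤ 1284699552 / 444215525 - 16 / 53 := by
  have bound_residues : ∀ r < 210, windowExcess r ≤ 1284699552 / 444215525 - 16 / 53 := by
    decide +kernel
  rw [← windowExcess_periodic.map_mod_nat n]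
  exact bound_residues _ (Nat.mod_lt _ (by norm_num))

theorem sum_Ico_excess_eq_windowExcess (m : ℕ) :
    ∑ a ∈ Ico (m + 1) (m + 28) with Nat.Coprime 210 a, (1 / ((a : ℝ) - (m + 1 / 2)) - 2 / 53) =
      windowExcess (m + 1) := by
  rw [sum_filter, sum_Ico_eq_sum_range, windowExcess, sum_filter, Rat.cast_sum]
  refine sum_congr (by simp) fun k _ ↦ ?_
  split_ifs
  · push_cast
    ring
  · rw [Rat.cast_zero]

theorem sum_one_div_sub_le_of_coprime {m : ℕ} {P : Finset ℕ} (hcard : #P ≤ 8)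
    (hcop : ∀ p ∈ P, Nat.Coprime 210 p) (hlt : ∀ p ∈ P, m < p) :
    ∑ p ∈ P, 1 / ((p : ℝ) - (m + 1 / 2)) ≤ 1284699552 / 444215525 := by
  have large_inside : ∀ a ∈ {a ∈ Ico (m + 1) (m + 28) | Nat.Coprime 210 a},
      (2 / 53 : ℝ) ≤ 1 / ((a : ℝ) - (m + 1 / 2)) := by
    intro a ha
    obtain ⟨ha_lower, ha_upper⟩ := mem_Ico.1 (mem_filter.1 ha).1
    have lower : (m + 1 : ℝ) ≤ a := mod_cast ha_lower
    have upper : (a : ℝ) ≤ m + 27 := mod_cast Nat.le_of_lt_succ ha_upper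
    rw [div_le_div_iff₀ (by norm_num) (by linarith)]
    linarith
  have small_outside : ∀ p ∈ P, p ∉ {a ∈ Ico (m + 1) (m + 28) | Nat.Coprime 210 a} →
      1 / ((p : ℝ) - (m + 1 / 2)) ≤ 2 / 53 := by
    intro p hp hp_out
    have far : m + 28 ≤ p := by
      by_contra! near
      exact hp_out (mem_filter.2 ⟨mem_Ico.2 ⟨hlt p hp, near⟩, hcop p hp⟩)
    have far_real : (m + 28 : ℝ) ≤ p := mod_cast far
    rw [div_le_div_iff₀ (by linarith) (by norm_num)]
    linarith
  have excess_le : (windowExcess (m + 1) : ℝ) ≤ 1284699552 / 444215525 - 16 / 53 := by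
    simpa only [Rat.cast_sub, Rat.cast_div, Rat.cast_ofNat] using
      (Rat.cast_le (K := ℝ)).2 (windowExcess_le (m + 1))
  calc
    ∑ p ∈ P, 1 / ((p : ℝ) - (m + 1 / 2)) ≤ 8 • (2 / 53 : ℝ) + windowExcess (m + 1) := by
      rw [← sum_Ico_excess_eq_windowExcess]
      exact sum_le_nsmul_add_sum_sub (by norm_num) hcard large_inside small_outside
    _ ≤ 1284699552 / 444215525 := by
      rw [nsmul_eq_mul]
      linarith

theorem sum_one_div_sub_le_two_mul_card {m : ℕ} {P : Finset ℕ} (hlt : ∀ p ∈ P, m < p) :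
    ∑ p ∈ P, 1 / ((p : ℝ) - (m + 1 / 2)) ≤ 2 * #P := by
  have term_le_two : ∀ p ∈ P, 1 / ((p : ℝ) - (m + 1 / 2)) ≤ 2 := by
    intro p hp
    have succ_le : (m + 1 : ℝ) ≤ p := mod_cast hlt p hp
    rw [div_le_iff₀ (by linarith)]
    linarith
  simpa only [nsmul_eq_mul, mul_comm] using sum_le_card_nsmul P _ 2 term_le_two

theorem card_primes_le_one_of_lt_seven {m : ℕ} (hm : m < 7) {P : Finset ℕ}
    (hP : ∀ p ∈ P, p.Prime ∧ m < p ∧ 4 * p < 6 * m + 3) : #P ≤ 1 := by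
  have card_le_one : ∀ m < 7, #{p ∈ range 10 | p.Prime ∧ m < p ∧ 4 * p < 6 * m + 3} ≤ 1 := by
    decide
  refine (card_le_card fun p hp ↦ ?_).trans (card_le_one m hm)
  have upper := (hP p hp).2.2
  exact mem_filter.2 ⟨mem_range.2 (by omega), hP p hp⟩

/-- Lemma 3(b): for `x > 1` a half-integer, the sum of `1/(p - x)` over any set of
at most eight primes in `(x, 3x/2)` is at most `C = 1284699552/444215525`. -/
theorem sum_inv_p_sub_x_le (x : ℝ) (hx : ∃ m : ℕ, 0 < m ∧ x = m + 1 / 2)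
    (hx1 : 1 < x) (P : Finset ℕ) (hcard : P.card ≤ 8)
    (hP : ∀ p ∈ P, p.Prime ∧ x < p ∧ (p : ℝ) < 3 * x / 2) :
    ∑ p ∈ P, 1 / ((p : ℝ) - x) ≤ (1284699552 : ℝ) / 444215525 := by
  obtain ⟨m, -, rfl⟩ := hx
  have lower : ∀ p ∈ P, m < p := fun p hp ↦ by
    have : (m : ℝ) < p := by linarith [(hP p hp).2.1]
    exact_mod_cast this
  have upper : ∀ p ∈ P, 4 * p < 6 * m + 3 := fun p hp ↦ by
    have : (4 * p : ℝ) < 6 * m + 3 := by linarith [(hP p hp).2.2]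
    exact_mod_cast this
  rcases lt_or_ge m 7 with hm | hm
  · have card_le_one : (#P : ℝ) ≤ 1 := mod_cast
      card_primes_le_one_of_lt_seven hm fun p hp ↦ ⟨(hP p hp).1, lower p hp, upper p hp⟩
    linarith [sum_one_div_sub_le_two_mul_card lower]
  · refine sum_one_div_sub_le_of_coprime hcard (fun p hp ↦ ?_) lower
    have coprime_factorial : p.Coprime (Nat.factorial 7) :=
      (hP p hp).1.coprime_factorial_of_lt (hm.trans_lt (lower p hp))
    exact (coprime_factorial.coprime_dvd_right (by decide)).symm
end

section
/- Let x ≥ 3.5 be a half-integer (x = m + 1/2 for some positive integer m) and let T ≥ 1/log(3/2). Then the series over all integers n ≥ 2 with n ≤ x/2 or n ≥ 3x/2 of (x/n)^{1/log x} · (Λ(n)/(n·log n)) · min{1, 1/(T·|log(x/n)|)} is at most (e/(T·log(3/2)))·(log log x + γ/log x). -/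
/-!
Write `s = 1 / log x`. Since `x ^ s = e` and `|log (x / n)| ≥ log (3 / 2)` in the far range, the sum
is at most `e / (T log (3 / 2)) * ∑ Λ(n) / (n ^ (1 + s) log n)`, and the last series is
`log ζ(1 + s)`. It remains to see that `ζ(1 + s) ≤ exp (γ s) / s` for every `s > 0`.

Put `F(t) = t⁻² - (1 + s) t ^ (-2 - s)`. Euler–Maclaurin summation gives
`ζ(1 + s) - 1 / s - γ = ∑ₙ ∫ₙⁿ⁺¹ (t - n) F(t) dt`. As `∫₁^∞ F = 0`, integrating by parts replaces
the weight `t - n` on `F` by the Peano kernel `(t - n) (n + 1 - t) / 2 ≤ 1 / 8` on `F'`. An upper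
bound for `F'` by a positive multiple of a power of `1 / t` then yields
`ζ(1 + s) ≤ 1 / s + γ + s / 7`, and `1 / 7` is less than the coefficient `γ² / 2` in the expansion
of `exp (γ s) / s`.
-/

section Zeta

open Real Set Filter Topology intervalIntegral ZetaAsymptotics

lemma integral_mul_sub_midpoint {F F' : ℝ → ℝ} {a b : ℝ}
    (hF : ∀ x ∈ uIcc a b, HasDerivAt F (F' x) x)
    (hF' : IntervalIntegrable F' MeasureTheory.volume a b) :
    ∫ x in a..b, F x * (x - (a + b) / 2) = ∫ x in a..b, F' x * ((x - a) * (b - x) / 2) := by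
  have hK : ∀ x ∈ uIcc a b,
      HasDerivAt (fun y ↦ -((y - a) * (b - y) / 2)) (x - (a + b) / 2) x := by
    intro x _
    convert! ((((hasDerivAt_id x).sub_const a).mul ((hasDerivAt_id x).const_sub b)).div_const
      2).neg using 1
    simp only [id]
    ring
  rw [integral_mul_deriv_eq_deriv_mul hF hK hF'
    (by fun_prop : Continuous _).continuousOn.intervalIntegrable]
  simp

lemma integral_sub_left_mul_le {F F' φ : ℝ → ℝ} {a b : ℝ} (hab : a ≤ b)
    (hF : ∀ x ∈ Icc a b, HasDerivAt F (F' x) x) (hF' : ContinuousOn F' (Icc a b))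
    (hφ : ContinuousOn φ (Icc a b)) (hφ₀ : ∀ x ∈ Icc a b, 0 ≤ φ x)
    (hle : ∀ x ∈ Icc a b, F' x ≤ φ x) :
    ∫ x in a..b, (x - a) * F x ≤
      (b - a) / 2 * (∫ x in a..b, F x) + (b - a) ^ 2 / 8 * ∫ x in a..b, φ x := by
  have hFc : ContinuousOn F (Icc a b) := fun x hx ↦ (hF x hx).continuousAt.continuousWithinAt
  rw [← uIcc_of_le hab] at hF hF' hφ hFc
  have kernel_le : ∫ x in a..b, F' x * ((x - a) * (b - x) / 2) ≤
      ∫ x in a..b, (b - a) ^ 2 / 8 * φ x := by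
    refine integral_mono_on hab (ContinuousOn.intervalIntegrable (by fun_prop))
      (ContinuousOn.intervalIntegrable (by fun_prop)) fun x hx ↦ ?_
    have hK₀ : 0 ≤ (x - a) * (b - x) / 2 := by
      have := mul_nonneg (sub_nonneg.2 hx.1) (sub_nonneg.2 hx.2)
      positivity
    have hK : (x - a) * (b - x) / 2 ≤ (b - a) ^ 2 / 8 := by
      nlinarith only [sq_nonneg (x - a - (b - x))]
    calc F' x * ((x - a) * (b - x) / 2)
      _ ≤ φ x * ((x - a) * (b - x) / 2) := by gcongr; exact hle x hx
      _ ≤ φ x * ((b - a) ^ 2 / 8) := by gcongr; exact hφ₀ x hx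
      _ = _ := mul_comm _ _
  calc ∫ x in a..b, (x - a) * F x
    _ = ∫ x in a..b, ((b - a) / 2 * F x + F x * (x - (a + b) / 2)) := by
      congr 1 with x; ring
    _ = (b - a) / 2 * (∫ x in a..b, F x) + ∫ x in a..b, F x * (x - (a + b) / 2) := by
      rw [integral_add (ContinuousOn.intervalIntegrable (by fun_prop))
        (ContinuousOn.intervalIntegrable (by fun_prop)), integral_const_mul]
    _ ≤ _ := by
      rw [integral_mul_sub_midpoint hF hF'.intervalIntegrable,
        ← integral_const_mul ((b - a) ^ 2 / 8)]
      gcongr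

/-- The function `F` with `ζ(1 + s) - 1 / s - γ = ∑ₙ ∫ₙⁿ⁺¹ (t - n) F(t) dt`; it is the derivative of
`t ^ (-1 - s) - t⁻¹`. -/
noncomputable def zetaKernel (s t : ℝ) : ℝ := t ^ (-2 : ℝ) - (1 + s) * t ^ (-2 - s)

/-- The derivative of `zetaKernel s`. -/
noncomputable def zetaKernelDeriv (s t : ℝ) : ℝ :=
  (1 + s) * (2 + s) * t ^ (-3 - s) - 2 * t ^ (-3 : ℝ)

/-- A multiple of a power of `1 / t` that dominates `zetaKernelDeriv s`. The coefficient and the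
exponent are chosen so that the two functions agree to first order at `t = 1`. -/
noncomputable def zetaKernelMajorant (s t : ℝ) : ℝ :=
  s * (3 + s) * t ^ (-3 - (1 + s) * (2 + s) / (3 + s))

lemma hasDerivAt_zetaKernel (s : ℝ) {t : ℝ} (ht : 0 < t) :
    HasDerivAt (zetaKernel s) (zetaKernelDeriv s t) t := by
  convert! (hasDerivAt_rpow_const (p := -2) (Or.inl ht.ne')).sub
    ((hasDerivAt_rpow_const (p := -2 - s) (Or.inl ht.ne')).const_mul (1 + s)) using 1
  rw [zetaKernelDeriv, show (-2 - 1 : ℝ) = -3 by norm_num, show -2 - s - 1 = -3 - s by ring]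
  ring

lemma continuousOn_rpow_const_Ioi (p : ℝ) : ContinuousOn (fun t : ℝ ↦ t ^ p) (Ioi 0) :=
  fun t ht ↦ (continuousAt_rpow_const t p (Or.inl (ne_of_gt ht))).continuousWithinAt

lemma continuousOn_zetaKernel (s : ℝ) : ContinuousOn (zetaKernel s) (Ioi 0) :=
  fun _ ht ↦ (hasDerivAt_zetaKernel s ht).continuousAt.continuousWithinAt

lemma continuousOn_zetaKernelDeriv (s : ℝ) : ContinuousOn (zetaKernelDeriv s) (Ioi 0) :=
  ((continuousOn_rpow_const_Ioi _).const_mul _).sub ((continuousOn_rpow_const_Ioi _).const_mul _)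

lemma continuousOn_zetaKernelMajorant (s : ℝ) : ContinuousOn (zetaKernelMajorant s) (Ioi 0) :=
  (continuousOn_rpow_const_Ioi _).const_mul _

lemma zetaKernelMajorant_nonneg {s t : ℝ} (hs : 0 < s) (ht : 0 < t) :
    0 ≤ zetaKernelMajorant s t := by
  unfold zetaKernelMajorant
  positivity

lemma zetaKernelDeriv_le_zetaKernelMajorant {s t : ℝ} (hs : 0 < s) (ht : 0 < t) :
    zetaKernelDeriv s t ≤ zetaKernelMajorant s t := by
  set p := (1 + s) * (2 + s) / (s * (3 + s)) with hp
  have hp₁ : 1 ≤ p := by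
    rw [hp, one_le_div (by positivity)]
    linarith
  have bernoulli : 1 + p * (t ^ (-s) - 1) ≤ t ^ (-((1 + s) * (2 + s) / (3 + s))) := by
    have h := one_add_mul_self_le_rpow_one_add
      (by linarith [rpow_nonneg ht.le (-s)] : -1 ≤ t ^ (-s) - 1) hp₁
    rwa [add_sub_cancel, ← rpow_mul ht.le, show -s * p = -((1 + s) * (2 + s) / (3 + s)) by
      rw [hp]; field] at h
  have hmul : s * (3 + s) * p = (1 + s) * (2 + s) := by rw [hp]; field
  calc zetaKernelDeriv s t
    _ = s * (3 + s) * (t ^ (-3 : ℝ) * (1 + p * (t ^ (-s) - 1))) := by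
      rw [zetaKernelDeriv, sub_eq_add_neg (-3), rpow_add ht]
      linear_combination (t ^ (-3 : ℝ) - t ^ (-3 : ℝ) * t ^ (-s)) * hmul
    _ ≤ s * (3 + s) * (t ^ (-3 : ℝ) * t ^ (-((1 + s) * (2 + s) / (3 + s)))) := by gcongr
    _ = zetaKernelMajorant s t := by rw [zetaKernelMajorant, sub_eq_add_neg (-3), rpow_add ht]

lemma integral_rpow_one_left {p M : ℝ} (hp : p ≠ -1) (hM : 1 ≤ M) :
    ∫ t in (1 : ℝ)..M, t ^ p = (M ^ (p + 1) - 1) / (p + 1) := by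
  rw [integral_rpow (Or.inr ⟨hp, notMem_uIcc_of_lt one_pos (by linarith)⟩), one_rpow]

lemma intervalIntegrable_of_continuousOn_Ioi {f : ℝ → ℝ} (hf : ContinuousOn f (Ioi 0)) {a b : ℝ}
    (ha : 0 < a) (hb : 0 < b) : IntervalIntegrable f MeasureTheory.volume a b :=
  (hf.mono fun _ ht ↦ (lt_min ha hb).trans_le ht.1).intervalIntegrable

lemma integral_zetaKernel_nonpos {s M : ℝ} (hs : 0 < s) (hM : 1 ≤ M) :
    ∫ t in (1 : ℝ)..M, zetaKernel s t ≤ 0 := by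
  have hM₀ : 0 < M := by linarith
  have hint (p : ℝ) := intervalIntegrable_of_continuousOn_Ioi (continuousOn_rpow_const_Ioi p)
    one_pos hM₀
  calc ∫ t in (1 : ℝ)..M, zetaKernel s t
    _ = M ^ (-1 - s) - M ^ (-1 : ℝ) := by
      simp only [zetaKernel]
      rw [integral_sub (hint _) ((hint _).const_mul _), integral_const_mul,
        integral_rpow_one_left (by norm_num) hM, integral_rpow_one_left (by linarith) hM,
        show (-2 + 1 : ℝ) = -1 by norm_num, show -2 - s + 1 = -1 - s by ring]
      have : -1 - s ≠ 0 := by linarith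
      field
    _ ≤ 0 := sub_nonpos.2 (rpow_le_rpow_of_exponent_le hM (by linarith))

lemma integral_zetaKernelMajorant_le {s M : ℝ} (hs : 0 < s) (hM : 1 ≤ M) :
    ∫ t in (1 : ℝ)..M, zetaKernelMajorant s t ≤ 8 * s / 7 := by
  set q := (1 + s) * (2 + s) / (3 + s) with hq
  have hq₀ : 0 < q := by positivity
  have hM₀ : 0 ≤ M ^ (-3 - q + 1) := rpow_nonneg (by linarith) _
  calc ∫ t in (1 : ℝ)..M, zetaKernelMajorant s t
    _ = s * (3 + s) * ((1 - M ^ (-3 - q + 1)) / (2 + q)) := by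
      simp only [zetaKernelMajorant]
      rw [integral_const_mul, integral_rpow_one_left (by linarith) hM, ← neg_div_neg_eq]
      congr 2 <;> ring
    _ ≤ s * (3 + s) * (1 / (2 + q)) := by gcongr; linarith
    _ = s * ((3 + s) ^ 2 / (s ^ 2 + 5 * s + 8)) := by
      rw [hq]
      field_simp
      ring
    _ ≤ s * (8 / 7) := by
      refine mul_le_mul_of_nonneg_left ?_ hs.le
      rw [div_le_div_iff₀ (by positivity) (by norm_num)]
      nlinarith only [sq_nonneg (s - 1)]
    _ = 8 * s / 7 := by ring

lemma term_one_sub_term_eq_integral {n : ℕ} (hn : 0 < n) {s : ℝ} (hs : 0 < s) :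
    term n 1 - (1 + s) * term n (1 + s) =
      ∫ t in (n : ℝ)..(n + 1), (t - n) * zetaKernel s t := by
  rw [term, term, ← integral_const_mul, ← integral_sub (term_welldef hn one_pos)
    ((term_welldef hn (by linarith)).const_mul _)]
  refine integral_congr fun t ht ↦ ?_
  have ht₀ : 0 < t := by
    rw [uIcc_of_le (by linarith)] at ht
    exact (Nat.cast_pos.2 hn).trans_le ht.1
  simp only [zetaKernel]
  rw [show (-2 : ℝ) = -(1 + 1) by norm_num, show -(1 + 1) - s = -(1 + s + 1) by ring,
    rpow_neg ht₀.le, rpow_neg ht₀.le]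
  ring

lemma term_one_sub_term_le {n : ℕ} (hn : 0 < n) {s : ℝ} (hs : 0 < s) :
    term n 1 - (1 + s) * term n (1 + s) ≤
      (∫ t in (n : ℝ)..(n + 1), zetaKernel s t) / 2 +
        (∫ t in (n : ℝ)..(n + 1), zetaKernelMajorant s t) / 8 := by
  have hpos : Icc (n : ℝ) (n + 1) ⊆ Ioi 0 := fun t ht ↦ (Nat.cast_pos.2 hn).trans_le ht.1
  rw [term_one_sub_term_eq_integral hn hs]
  refine (integral_sub_left_mul_le (by linarith)
    (fun t ht ↦ hasDerivAt_zetaKernel s (hpos ht)) ((continuousOn_zetaKernelDeriv s).mono hpos)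
    ((continuousOn_zetaKernelMajorant s).mono hpos)
    (fun t ht ↦ zetaKernelMajorant_nonneg hs (hpos ht))
    (fun t ht ↦ zetaKernelDeriv_le_zetaKernelMajorant hs (hpos ht))).trans_eq ?_
  ring

lemma sum_integral_natCast_add_one {f : ℝ → ℝ} (hf : ContinuousOn f (Ioi 0)) (N : ℕ) :
    ∑ n ∈ Finset.range N, ∫ t in ((n + 1 : ℕ) : ℝ)..((n + 1 : ℕ) + 1), f t =
      ∫ t in (1 : ℝ)..(N + 1), f t := by
  have h := sum_integral_adjacent_intervals (μ := MeasureTheory.volume) (f := f)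
    (a := fun n : ℕ ↦ (n : ℝ) + 1) (n := N) fun n _ ↦
      intervalIntegrable_of_continuousOn_Ioi hf (by positivity) (by positivity)
  simpa using h

lemma termSum_one_sub_termSum_le (N : ℕ) {s : ℝ} (hs : 0 < s) :
    termSum 1 N - (1 + s) * termSum (1 + s) N ≤ s / 7 := by
  have hN : (1 : ℝ) ≤ N + 1 := by linarith [N.cast_nonneg (α := ℝ)]
  calc termSum 1 N - (1 + s) * termSum (1 + s) N
    _ = ∑ n ∈ Finset.range N, (term (n + 1) 1 - (1 + s) * term (n + 1) (1 + s)) := by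
      rw [termSum, termSum, Finset.mul_sum, Finset.sum_sub_distrib]
    _ ≤ (∫ t in (1 : ℝ)..(N + 1), zetaKernel s t) / 2 +
        (∫ t in (1 : ℝ)..(N + 1), zetaKernelMajorant s t) / 8 := by
      rw [← sum_integral_natCast_add_one (continuousOn_zetaKernel s),
        ← sum_integral_natCast_add_one (continuousOn_zetaKernelMajorant s), Finset.sum_div,
        Finset.sum_div, ← Finset.sum_add_distrib]
      exact Finset.sum_le_sum fun n _ ↦ term_one_sub_term_le n.succ_pos hs
    _ ≤ s / 7 := by
      linarith [integral_zetaKernel_nonpos hs hN, integral_zetaKernelMajorant_le hs hN]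

lemma term_le_term_of_le {n : ℕ} (hn : 0 < n) {s t : ℝ} (hs : 0 < s) (hst : s ≤ t) :
    term n t ≤ term n s := by
  refine integral_mono_on (by linarith) (term_welldef hn (hs.trans_le hst)) (term_welldef hn hs)
    fun x hx ↦ ?_
  have hx₁ : 1 ≤ x := (Nat.one_le_cast.2 hn).trans hx.1
  have := sub_nonneg.2 hx.1
  gcongr

lemma summable_term {s : ℝ} (hs : 1 ≤ s) : Summable fun n ↦ term (n + 1) s :=
  term_tsum_one.summable.of_nonneg_of_le (fun n ↦ term_nonneg (n + 1) s)
    fun n ↦ term_le_term_of_le n.succ_pos one_pos hs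

lemma riemannZeta_ofReal_re_eq_tsum {σ : ℝ} (hσ : 1 < σ) :
    (riemannZeta σ).re = ∑' n : ℕ, 1 / (n + 1 : ℝ) ^ σ := by
  rw [zeta_eq_tsum_one_div_nat_add_one_cpow (by simpa using hσ), ← Complex.ofReal_re (∑' _, _),
    Complex.ofReal_tsum]
  congr! 3 with n
  rw [Complex.ofReal_div, Complex.ofReal_cpow (by positivity)]
  simp

lemma riemannZeta_one_add_re_le {s : ℝ} (hs : 0 < s) :
    (riemannZeta (1 + s : ℝ)).re ≤ 1 / s + eulerMascheroniConstant + s / 7 := by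
  have hlim : Tendsto (fun N ↦ termSum 1 N - (1 + s) * termSum (1 + s) N) atTop
      (𝓝 (1 - eulerMascheroniConstant - (1 + s) * termTSum (1 + s))) :=
    term_tsum_one.tendsto_sum_nat.sub
      ((summable_term (by linarith)).hasSum.tendsto_sum_nat.const_mul _)
  have hle := le_of_tendsto' hlim fun N ↦ termSum_one_sub_termSum_le N hs
  have hζ := zeta_limit_aux1 (by linarith : 1 < 1 + s)
  rw [← riemannZeta_ofReal_re_eq_tsum (by linarith), add_sub_cancel_left] at hζ
  linarith

lemma two_div_seven_le_eulerMascheroniConstant_sq : 2 / 7 ≤ eulerMascheroniConstant ^ 2 := by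
  have hseq : 7 / 13 < eulerMascheroniSeq 15 := by
    have hlog : log 16 = 4 * log 2 := by
      rw [show (16 : ℝ) = 2 ^ 4 by norm_num, log_pow]
      norm_num
    rw [eulerMascheroniSeq, show ((15 : ℕ) : ℝ) + 1 = 16 by norm_num, hlog,
      show harmonic 15 = 1195757 / 360360 by
        norm_num [harmonic, Finset.sum_range_succ]]
    push_cast
    linarith [log_two_lt_d9]
  nlinarith only [hseq.trans (eulerMascheroniSeq_lt_eulerMascheroniConstant 15)]

lemma riemannZeta_one_add_re_le_exp_div {s : ℝ} (hs : 0 < s) :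
    (riemannZeta (1 + s : ℝ)).re ≤ exp (eulerMascheroniConstant * s) / s := by
  set g := eulerMascheroniConstant
  have hg : 0 < g := one_half_pos.trans one_half_lt_eulerMascheroniConstant
  have hg₂ : 2 / 7 ≤ g ^ 2 := two_div_seven_le_eulerMascheroniConstant_sq
  rw [le_div_iff₀ hs]
  calc (riemannZeta (1 + s : ℝ)).re * s
    _ ≤ (1 / s + g + s / 7) * s := by gcongr; exact riemannZeta_one_add_re_le hs
    _ = 1 + g * s + 2 / 7 * s ^ 2 / 2 := by field
    _ ≤ 1 + g * s + g ^ 2 * s ^ 2 / 2 := by gcongr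
    _ = 1 + g * s + (g * s) ^ 2 / 2 := by ring
    _ ≤ exp (g * s) := quadratic_le_exp_of_nonneg (by positivity)

lemma log_riemannZeta_one_add_re_le {s : ℝ} (hs : 0 < s) :
    log (riemannZeta (1 + s : ℝ)).re ≤ -log s + eulerMascheroniConstant * s := by
  refine (log_le_log (riemannZeta_re_pos_of_one_lt (by linarith))
    (riemannZeta_one_add_re_le_exp_div hs)).trans_eq ?_
  rw [log_div (exp_ne_zero _) hs.ne', log_exp]
  ring

end Zeta

section Perron

open Real
open ArithmeticFunction hiding log

lemma vonMangoldt_div_rpow_mul_log_nonneg (σ : ℝ) (n : ℕ) :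
    0 ≤ Λ n / ((n : ℝ) ^ σ * log n) :=
  div_nonneg vonMangoldt_nonneg (mul_nonneg (by positivity) (log_natCast_nonneg n))

lemma summable_vonMangoldt_div_rpow_mul_log {σ : ℝ} (hσ : 1 < σ) :
    Summable fun n : ℕ ↦ Λ n / ((n : ℝ) ^ σ * log n) := by
  refine (summable_one_div_nat_rpow.2 hσ).of_nonneg_of_le
    (vonMangoldt_div_rpow_mul_log_nonneg σ) fun n ↦ ?_
  rw [mul_comm, ← div_div]
  gcongr
  exact div_le_one_of_le₀ vonMangoldt_le_log (log_natCast_nonneg n)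

lemma log_three_halves_le_abs_log_div {x y : ℝ} (hx : 0 < x) (hy : 0 < y)
    (h : y ≤ x / 2 ∨ 3 * x / 2 ≤ y) : log (3 / 2) ≤ |log (x / y)| := by
  rcases h with h | h
  · refine (log_le_log (by norm_num) ?_).trans (le_abs_self _)
    rw [le_div_iff₀ hy]
    linarith
  · rw [← abs_neg, ← log_inv, inv_div]
    refine (log_le_log (by norm_num) ?_).trans (le_abs_self _)
    rw [le_div_iff₀ hx]
    linarith

lemma perron_term_nonneg {x T : ℝ} (hx : 0 < x) (hT : 0 < T) (n : ℕ) :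
    0 ≤ (x / n) ^ (1 / log x) * (Λ n / (n * log n)) * min 1 (1 / (T * |log (x / n)|)) := by
  have : 0 ≤ log n := log_natCast_nonneg n
  have : 0 ≤ Λ n := vonMangoldt_nonneg
  have : 0 ≤ min 1 (1 / (T * |log (x / n)|)) := le_min zero_le_one (by positivity)
  positivity

lemma perron_far_term_le {x T : ℝ} (hx : 1 < x) (hT : 0 < T) {n : ℕ} (hn : 0 < n)
    (hfar : (n : ℝ) ≤ x / 2 ∨ 3 * x / 2 ≤ n) :
    (x / n) ^ (1 / log x) * (Λ n / (n * log n)) * min 1 (1 / (T * |log (x / n)|)) ≤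
      exp 1 / (T * log (3 / 2)) * (Λ n / ((n : ℝ) ^ (1 + 1 / log x) * log n)) := by
  have hx₀ : 0 < x := by linarith
  have hn₀ : (0 : ℝ) < n := Nat.cast_pos.2 hn
  have : 0 ≤ log n := log_natCast_nonneg n
  have : 0 ≤ Λ n := vonMangoldt_nonneg
  have : 0 < log (3 / 2) := log_pos (by norm_num)
  have hmin : min 1 (1 / (T * |log (x / n)|)) ≤ 1 / (T * log (3 / 2)) := by
    refine (min_le_right _ _).trans ?_
    gcongr
    exact log_three_halves_le_abs_log_div hx₀ hn₀ hfar
  have hpow : (x / n) ^ (1 / log x) = exp 1 / (n : ℝ) ^ (1 / log x) := by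
    rw [div_rpow hx₀.le hn₀.le, one_div, rpow_inv_log hx₀ hx.ne']
  calc (x / n) ^ (1 / log x) * (Λ n / (n * log n)) * min 1 (1 / (T * |log (x / n)|))
    _ ≤ (x / n) ^ (1 / log x) * (Λ n / (n * log n)) * (1 / (T * log (3 / 2))) := by gcongr
    _ = _ := by
      rw [hpow, rpow_add hn₀, rpow_one]
      simp only [div_eq_mul_inv, mul_inv]
      ring

theorem perron_error_far_bound_general {x T : ℝ} (hx : 1 < x) (hT : 0 < T) :
    (∑' n : ℕ, if 2 ≤ n ∧ ((n : ℝ) ≤ x / 2 ∨ 3 * x / 2 ≤ (n : ℝ)) then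
        (x / n) ^ (1 / log x) * (Λ n / (n * log n)) * min 1 (1 / (T * |log (x / n)|))
      else 0)
    ≤ exp 1 / (T * log (3 / 2)) * (log (log x) + eulerMascheroniConstant / log x) := by
  have hs : 0 < 1 / log x := one_div_pos.2 (log_pos hx)
  have hσ : 1 < 1 + 1 / log x := by linarith
  set C := exp 1 / (T * log (3 / 2))
  set term : ℕ → ℝ := fun n ↦ if 2 ≤ n ∧ ((n : ℝ) ≤ x / 2 ∨ 3 * x / 2 ≤ (n : ℝ)) then
    (x / n) ^ (1 / log x) * (Λ n / (n * log n)) * min 1 (1 / (T * |log (x / n)|)) else 0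
  have hC : 0 ≤ C := by
    have : 0 < log (3 / 2) := log_pos (by norm_num)
    positivity
  have hsum := (summable_vonMangoldt_div_rpow_mul_log hσ).mul_left C
  have term_nonneg : ∀ n : ℕ, 0 ≤ term n := fun n ↦ by
    simp only [term]
    split_ifs
    exacts [perron_term_nonneg (by linarith) hT n, le_rfl]
  have term_le : ∀ n : ℕ, term n ≤ C * (Λ n / ((n : ℝ) ^ (1 + 1 / log x) * log n)) := fun n ↦ by
    simp only [term]
    split_ifs with hn
    exacts [perron_far_term_le hx hT (by lia) hn.2,
      mul_nonneg hC (vonMangoldt_div_rpow_mul_log_nonneg _ n)]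
  calc ∑' n : ℕ, term n
    _ ≤ ∑' n : ℕ, C * (Λ n / ((n : ℝ) ^ (1 + 1 / log x) * log n)) := by
        exact (hsum.of_nonneg_of_le term_nonneg term_le).tsum_le_tsum term_le hsum
    _ = C * log (riemannZeta (1 + 1 / log x : ℝ)).re := by
        rw [tsum_mul_left, log_riemannZeta_eq hσ]
    _ ≤ C * (log (log x) + eulerMascheroniConstant / log x) := by
        gcongr
        refine (log_riemannZeta_one_add_re_le hs).trans_eq ?_
        rw [one_div, log_inv, neg_neg, div_eq_mul_inv]

end Perron

open ArithmeticFunction in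
/-- The estimate (3.2): the part of the Perron error sum with `n ≤ x/2` or
`n ≥ 3x/2` is at most `(e/(T log(3/2))) (log log x + γ/log x)`. -/
theorem perron_error_far_bound (x T : ℝ)
    (hx : ∃ m : ℕ, 0 < m ∧ x = m + 1 / 2) (hx' : 3.5 ≤ x)
    (hT : 1 / Real.log (3 / 2) ≤ T) :
    (∑' n : ℕ, if 2 ≤ n ∧ ((n : ℝ) ≤ x / 2 ∨ 3 * x / 2 ≤ (n : ℝ)) then
        (x / n) ^ (1 / Real.log x) * (Λ n / (n * Real.log n)) *
          min 1 (1 / (T * |Real.log (x / n)|))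
      else 0)
    ≤ Real.exp 1 / (T * Real.log (3 / 2)) *
        (Real.log (Real.log x) + Real.eulerMascheroniConstant / Real.log x) :=
  perron_error_far_bound_general (lt_of_lt_of_le (by norm_num) hx')
    ((one_div_pos.2 (Real.log_pos (by norm_num))).trans_le hT)
end

section
/- Let x ≥ 3.5 be a half-integer (x = m + 1/2 for some positive integer m) and let C = 1284699552/444215525. Then ∑_{p prime, x/2 < p < x} 1/(x − p) ≤ C + 2·log(log x). -/
/-!
Write `x = m + 1 / 2` and `p = m - k`, so that the sum is `∑ 1 / (k + 1 / 2)` over the offsets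
`k < m / 2` for which `m - k` is prime. Apart from `2`, `3` and `5` the primes lie in the `8`
invertible classes modulo `30`: the offsets `k < 30` contribute at most the worst sum over a window
of `30` residues, which is the constant `C`, and each later window `[30 i, 30 (i + 1))` at most
`8 / (30 i)`. This suffices for `m ≤ 2 ^ 22`, and in general for the offsets below `2 ^ 21`.

Beyond that, Selberg's sieve of level `N` leaves at most `y / log (N + 1) + N ^ 2` primes in an
interval of length `y`. On the block of offsets `[2 ^ (j (j + 1) / 2), 2 ^ ((j + 1) (j + 2) / 2))`
we take `N = 2 ^ ⌊j ^ 2 / 4⌋`; partial summation bounds the contribution of the block by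
`4 / (j - 1)` plus a geometrically small error. Since `j ^ 2` has the order of `log m` when the last
block is reached, the blocks contribute `4 log j`, which is `2 log log m`, up to a constant;
starting at `j = 6` leaves room for the offsets in `[30, 2 ^ 21)`.
-/

section SelbergWeights

open ArithmeticFunction BoundingSieve Finset
open scoped ArithmeticFunction.Moebius

variable (s : BoundingSieve) (N : ℕ)

/-- The Selberg sum `S = ∑ g(l)`, over the `l ≤ N` dividing the sifting product `P`. -/
noncomputable def selbergSum : ℝ :=
  ∑ l ∈ s.prodPrimes.divisors with l ≤ N, s.selbergTerms l

/-- Selberg's weights of level `N`, which minimise the main sum of the `Λ²` sieve among the weights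
that are `1` at `1` and supported on `d ≤ N`. -/
noncomputable def selbergWeight (d : ℕ) : ℝ :=
  (s.nu d)⁻¹ * μ d * (∑ l ∈ s.prodPrimes.divisors with d ∣ l ∧ l ≤ N, s.selbergTerms l) /
    selbergSum s N

variable {s N}

theorem selbergSum_pos (hN : N ≠ 0) : 0 < selbergSum s N := by
  refine sum_pos (fun l hl ↦ ?_) ⟨1, ?_⟩
  · exact selbergTerms_pos (Nat.dvd_of_mem_divisors (mem_filter.1 hl).1)
  · simp [prodPrimes_ne_zero, Nat.one_le_iff_ne_zero, hN]

theorem selbergWeight_one (hN : N ≠ 0) : selbergWeight s N 1 = 1 := by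
  simpa [selbergWeight, s.nu_mult.map_one, selbergSum] using
    div_self (selbergSum_pos (s := s) hN).ne'

theorem selbergWeight_eq_zero {d : ℕ} (hd : N < d) : selbergWeight s N d = 0 := by
  have hempty : {l ∈ s.prodPrimes.divisors | d ∣ l ∧ l ≤ N} = ∅ := by
    refine filter_eq_empty_iff.2 fun l hl ⟨hdl, hlN⟩ ↦ ?_
    exact (hd.trans_le (Nat.le_of_dvd (Nat.pos_of_mem_divisors hl) hdl)).not_ge hlN
  simp [selbergWeight, hempty]

theorem inv_nu_mul_selbergTerms_mul {d m : ℕ} (hdm : d * m ∣ s.prodPrimes) :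
    (s.nu d)⁻¹ * s.selbergTerms (d * m) = ∑ k ∈ d.divisors, s.selbergTerms (k * m) := by
  have hd : d ∣ s.prodPrimes := dvd_of_mul_right_dvd hdm
  have hcop : d.Coprime m := Nat.coprime_of_squarefree_mul (squarefree_of_dvd_prodPrimes hdm)
  have hdiv := sum_divisors_selbergTerms_eq_selbergTerms_mul_nu_inv hd
  rw [← sum_filter, Nat.divisors_filter_dvd_of_dvd prodPrimes_ne_zero hd] at hdiv
  rw [selbergTerms_isMultiplicative.map_mul_of_coprime hcop, ← mul_assoc, mul_comm (s.nu d)⁻¹,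
    ← hdiv, sum_mul]
  exact sum_congr rfl fun k hk ↦ (selbergTerms_isMultiplicative.map_mul_of_coprime
    (hcop.coprime_dvd_left (Nat.dvd_of_mem_divisors hk))).symm

/-- Expanding `(ν d)⁻¹ g(d m)` as `∑ g(k m)` over `k ∣ d`, no `n` arises twice as `n = k m`: it
determines `k = gcd(n, d)`. -/
theorem inv_nu_mul_sum_selbergTerms_le_selbergSum {d : ℕ} (hd : d ∣ s.prodPrimes) :
    (s.nu d)⁻¹ * ∑ l ∈ s.prodPrimes.divisors with d ∣ l ∧ l ≤ N, s.selbergTerms l ≤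
      selbergSum s N := by
  set multiples := {l ∈ s.prodPrimes.divisors | d ∣ l ∧ l ≤ N}
  have hd0 : 0 < d := Nat.pos_of_dvd_of_pos hd (Nat.pos_of_ne_zero prodPrimes_ne_zero)
  have hmul {l : ℕ} (hl : l ∈ multiples) : ∃ m, l = d * m ∧ d * m ∣ s.prodPrimes ∧ d * m ≤ N := by
    obtain ⟨hlP, ⟨m, rfl⟩, hlN⟩ := mem_filter.1 hl
    exact ⟨m, rfl, Nat.dvd_of_mem_divisors hlP, hlN⟩
  have hgcd {k m : ℕ} (hk : k ∈ d.divisors) (hdm : d * m ∣ s.prodPrimes) : (k * m).gcd d = k := by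
    have hcop := Nat.coprime_of_squarefree_mul (squarefree_of_dvd_prodPrimes hdm)
    rw [hcop.symm.gcd_mul_right_cancel, Nat.gcd_eq_left (Nat.dvd_of_mem_divisors hk)]
  have hinj : Set.InjOn (fun z : ℕ × ℕ ↦ z.2 * (z.1 / d)) ↑(multiples ×ˢ d.divisors) := by
    rintro ⟨l, k⟩ hlk ⟨l', k'⟩ hlk' h
    obtain ⟨hl, hk⟩ : l ∈ multiples ∧ k ∈ d.divisors := mem_product.1 hlk
    obtain ⟨hl', hk'⟩ : l' ∈ multiples ∧ k' ∈ d.divisors := mem_product.1 hlk'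
    obtain ⟨m, rfl, hdm, -⟩ := hmul hl
    obtain ⟨m', rfl, hdm', -⟩ := hmul hl'
    simp only [Nat.mul_div_cancel_left _ hd0] at h
    obtain rfl : k = k' := by rw [← hgcd hk hdm, h, hgcd hk' hdm']
    rw [Nat.eq_of_mul_eq_mul_left (Nat.pos_of_mem_divisors hk) h]
  have hterm {l : ℕ} (hl : l ∈ multiples) :
      (s.nu d)⁻¹ * s.selbergTerms l = ∑ k ∈ d.divisors, s.selbergTerms (k * (l / d)) := by
    obtain ⟨m, rfl, hdm, -⟩ := hmul hl
    rw [Nat.mul_div_cancel_left m hd0, inv_nu_mul_selbergTerms_mul hdm]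
  rw [mul_sum, sum_congr rfl fun l ↦ hterm, ← sum_product', selbergSum]
  refine (sum_image (f := s.selbergTerms) hinj).symm.trans_le <|
    sum_le_sum_of_subset_of_nonneg (fun n hn ↦ ?_) fun l hl _ ↦
      (selbergTerms_pos (Nat.dvd_of_mem_divisors (mem_filter.1 hl).1)).le
  obtain ⟨⟨l, k⟩, hlk, rfl⟩ := mem_image.1 hn
  obtain ⟨hl, hk⟩ := mem_product.1 hlk
  obtain ⟨m, rfl, hdm, hN⟩ := hmul hl
  have hkd := Nat.dvd_of_mem_divisors hk
  simp only [Nat.mul_div_cancel_left _ hd0, mem_filter, Nat.mem_divisors]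
  exact ⟨⟨(Nat.mul_dvd_mul_right hkd m).trans hdm, prodPrimes_ne_zero⟩,
    (Nat.mul_le_mul_right m (Nat.le_of_dvd hd0 hkd)).trans hN⟩

theorem abs_selbergWeight_le_one (hN : N ≠ 0) {d : ℕ} (hd : d ∣ s.prodPrimes) :
    |selbergWeight s N d| ≤ 1 := by
  have hμ : |(μ d : ℝ)| ≤ 1 := mod_cast abs_moebius_le_one
  have hnonneg : 0 ≤ (s.nu d)⁻¹ *
      ∑ l ∈ s.prodPrimes.divisors with d ∣ l ∧ l ≤ N, s.selbergTerms l :=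
    mul_nonneg (inv_nonneg.2 (nu_pos_of_dvd_prodPrimes hd).le) <| sum_nonneg fun l hl ↦
      (selbergTerms_pos (Nat.dvd_of_mem_divisors (mem_filter.1 hl).1)).le
  rw [selbergWeight, abs_div, abs_of_pos (selbergSum_pos hN), div_le_one (selbergSum_pos hN),
    mul_right_comm, abs_mul, abs_of_nonneg hnonneg]
  exact (mul_le_of_le_one_right hnonneg hμ).trans (inv_nu_mul_sum_selbergTerms_le_selbergSum hd)

theorem sum_abs_selbergWeight_le (hN : N ≠ 0) :
    ∑ d ∈ s.prodPrimes.divisors, |selbergWeight s N d| ≤ N := by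
  calc ∑ d ∈ s.prodPrimes.divisors, |selbergWeight s N d|
      ≤ ∑ d ∈ s.prodPrimes.divisors, if d ∈ Icc 1 N then 1 else 0 := by
        refine sum_le_sum fun d hd ↦ ?_
        rcases lt_or_ge N d with hNd | hdN
        · simp [selbergWeight_eq_zero hNd, hNd.not_ge]
        · simpa [hdN, Nat.pos_of_mem_divisors hd, Nat.one_le_iff_ne_zero,
            (Nat.pos_of_mem_divisors hd).ne'] using
            abs_selbergWeight_le_one hN (Nat.dvd_of_mem_divisors hd)
    _ ≤ N := by
        rw [sum_boole, filter_mem_eq_inter]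
        exact_mod_cast (card_le_card inter_subset_right).trans (by simp)

theorem sum_divisors_dvd_moebius (l : ℕ) {n : ℕ} (hn : Squarefree n) :
    ∑ d ∈ n.divisors with l ∣ d, μ d = if l = n then μ l else 0 := by
  by_cases hl : l ∣ n
  swap
  · rw [filter_false_of_mem fun d hd hld ↦ hl (hld.trans (Nat.dvd_of_mem_divisors hd)), sum_empty,
      if_neg (by rintro rfl; exact hl dvd_rfl)]
  obtain ⟨t, rfl⟩ := hl
  have hl0 : 0 < l := Nat.pos_of_ne_zero (left_ne_zero_of_mul hn.ne_zero)
  have hcop : l.Coprime t := Nat.coprime_of_squarefree_mul hn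
  have himage : {d ∈ (l * t).divisors | l ∣ d} = t.divisors.image (l * ·) := by
    ext d
    simp only [mem_filter, Nat.mem_divisors, mem_image]
    constructor
    · rintro ⟨⟨hd, h0⟩, e, rfl⟩
      exact ⟨e, ⟨Nat.dvd_of_mul_dvd_mul_left hl0 hd, right_ne_zero_of_mul h0⟩, rfl⟩
    · rintro ⟨e, ⟨he, -⟩, rfl⟩
      exact ⟨⟨Nat.mul_dvd_mul_left l he, hn.ne_zero⟩, dvd_mul_right l e⟩
  have hμ : ∀ e ∈ t.divisors, μ (l * e) = μ l * μ e := fun e he ↦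
    isMultiplicative_moebius.map_mul_of_coprime
      (hcop.coprime_dvd_right (Nat.dvd_of_mem_divisors he))
  rw [himage, sum_image fun _ _ _ _ ↦ Nat.eq_of_mul_eq_mul_left hl0, sum_congr rfl hμ, ← mul_sum,
    ← coe_mul_zeta_apply, moebius_mul_coe_zeta, one_apply]
  simp [hl0.ne']

theorem sum_nu_mul_selbergWeight {l : ℕ} (hl : l ∣ s.prodPrimes) :
    ∑ d ∈ s.prodPrimes.divisors with l ∣ d, s.nu d * selbergWeight s N d =
      if l ≤ N then μ l * s.selbergTerms l / selbergSum s N else 0 := by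
  have hterm {d : ℕ} (hd : d ∈ {d ∈ s.prodPrimes.divisors | l ∣ d}) :
      s.nu d * selbergWeight s N d =
        ∑ n ∈ s.prodPrimes.divisors with d ∣ n ∧ n ≤ N,
          μ d * (s.selbergTerms n / selbergSum s N) := by
    have hnu := nu_ne_zero (s := s) (Nat.dvd_of_mem_divisors (mem_filter.1 hd).1)
    rw [selbergWeight, ← mul_sum, ← sum_div]
    field_simp
  have hswap (d n : ℕ) : d ∈ {d ∈ s.prodPrimes.divisors | l ∣ d} ∧
        n ∈ {n ∈ s.prodPrimes.divisors | d ∣ n ∧ n ≤ N} ↔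
      d ∈ {d ∈ n.divisors | l ∣ d} ∧ n ∈ {n ∈ s.prodPrimes.divisors | n ≤ N} := by
    simp only [mem_filter, Nat.mem_divisors]
    exact ⟨fun ⟨⟨_, hld⟩, hnP, hdn, hnN⟩ ↦
        ⟨⟨⟨hdn, ne_zero_of_dvd_ne_zero prodPrimes_ne_zero hnP.1⟩, hld⟩, hnP, hnN⟩,
      fun ⟨⟨⟨hdn, _⟩, hld⟩, hnP, hnN⟩ ↦ ⟨⟨⟨hdn.trans hnP.1, hnP.2⟩, hld⟩, hnP, hdn, hnN⟩⟩
  have hinner {n : ℕ} (hn : n ∈ {n ∈ s.prodPrimes.divisors | n ≤ N}) :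
      ∑ d ∈ n.divisors with l ∣ d, μ d * (s.selbergTerms n / selbergSum s N) =
        if l = n then μ l * (s.selbergTerms l / selbergSum s N) else 0 := by
    rw [← sum_mul, ← Int.cast_sum, sum_divisors_dvd_moebius l
      (squarefree_of_dvd_prodPrimes (Nat.dvd_of_mem_divisors (mem_filter.1 hn).1))]
    split_ifs with h <;> simp [h]
  rw [sum_congr rfl fun d ↦ hterm, sum_comm' hswap, sum_congr rfl fun n ↦ hinner, sum_ite_eq]
  simp [hl, prodPrimes_ne_zero, mul_div_assoc]

theorem mainSum_lambdaSquared_selbergWeight (hN : N ≠ 0) :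
    s.mainSum (lambdaSquared (selbergWeight s N)) = (selbergSum s N)⁻¹ := by
  have hS := (selbergSum_pos (s := s) hN).ne'
  have hterm {l : ℕ} (hl : l ∈ s.prodPrimes.divisors) :
      (s.selbergTerms l)⁻¹ * (∑ d ∈ s.prodPrimes.divisors,
          if l ∣ d then s.nu d * selbergWeight s N d else 0) ^ 2 =
        if l ≤ N then s.selbergTerms l / selbergSum s N ^ 2 else 0 := by
    have hlP := Nat.dvd_of_mem_divisors hl
    have hμ : (μ l : ℝ) ^ 2 = 1 := mod_cast moebius_sq_eq_one_of_squarefree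
      (squarefree_of_dvd_prodPrimes hlP)
    have hg := (selbergTerms_pos hlP).ne'
    rw [← sum_filter, sum_nu_mul_selbergWeight hlP]
    split_ifs
    · rw [div_pow, mul_pow, hμ]
      field_simp
    · simp
  rw [mainSum_lambdaSquared_eq_sum_mul_sum_sq, sum_congr rfl fun l ↦ hterm, ← sum_filter, ← sum_div,
    ← selbergSum]
  field_simp

theorem errSum_lambdaSquared_le {R : ℝ} (hR : ∀ d, d ∣ s.prodPrimes → |s.rem d| ≤ R) (w : ℕ → ℝ) :
    s.errSum (lambdaSquared w) ≤ R * (∑ d ∈ s.prodPrimes.divisors, |w d|) ^ 2 := by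
  set D := s.prodPrimes.divisors
  have hR0 : 0 ≤ R := (abs_nonneg _).trans (hR 1 (one_dvd _))
  have hlambda {d : ℕ} (hd : d ∈ D) : |lambdaSquared w d| ≤
      ∑ d₁ ∈ D, ∑ d₂ ∈ D, if d = d₁.lcm d₂ then |w d₁| * |w d₂| else 0 := by
    have hsub : d.divisors ⊆ D :=
      Nat.divisors_subset_of_dvd prodPrimes_ne_zero (Nat.dvd_of_mem_divisors hd)
    have hnonneg (d₁ d₂ : ℕ) : 0 ≤ if d = d₁.lcm d₂ then |w d₁| * |w d₂| else 0 := by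
      split_ifs <;> positivity
    calc |lambdaSquared w d|
        ≤ ∑ d₁ ∈ d.divisors, ∑ d₂ ∈ d.divisors, if d = d₁.lcm d₂ then |w d₁| * |w d₂| else 0 := by
          refine (abs_sum_le_sum_abs _ _).trans <| sum_le_sum fun d₁ _ ↦
            (abs_sum_le_sum_abs _ _).trans_eq <| sum_congr rfl fun d₂ _ ↦ ?_
          rw [apply_ite abs, abs_mul, abs_zero]
      _ ≤ _ := (sum_le_sum fun d₁ _ ↦ sum_le_sum_of_subset_of_nonneg hsub fun d₂ _ _ ↦
          hnonneg d₁ d₂).trans <| sum_le_sum_of_subset_of_nonneg hsub fun d₁ _ _ ↦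
            sum_nonneg fun d₂ _ ↦ hnonneg d₁ d₂
  calc s.errSum (lambdaSquared w)
      ≤ ∑ d ∈ D, (∑ d₁ ∈ D, ∑ d₂ ∈ D, if d = d₁.lcm d₂ then |w d₁| * |w d₂| else 0) * R :=
        sum_le_sum fun d hd ↦ mul_le_mul (hlambda hd) (hR d (Nat.dvd_of_mem_divisors hd))
          (abs_nonneg _) ((abs_nonneg _).trans (hlambda hd))
    _ = R * ∑ d₁ ∈ D, ∑ d₂ ∈ D, ∑ d ∈ D, if d = d₁.lcm d₂ then |w d₁| * |w d₂| else 0 := by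
        rw [← sum_mul, mul_comm, sum_comm, sum_congr rfl fun _ _ ↦ sum_comm]
    _ ≤ R * ∑ d₁ ∈ D, ∑ d₂ ∈ D, |w d₁| * |w d₂| := by
        gcongr with d₁ _ d₂ _
        rw [sum_ite_eq']
        split_ifs <;> [rfl; positivity]
    _ = R * (∑ d ∈ D, |w d|) ^ 2 := by rw [sq, sum_mul_sum]

theorem siftedSum_le_div_selbergSum_add (hN : N ≠ 0) {R : ℝ}
    (hR : ∀ d, d ∣ s.prodPrimes → |s.rem d| ≤ R) :
    s.siftedSum ≤ s.totalMass / selbergSum s N + R * N ^ 2 := by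
  have hR0 : 0 ≤ R := (abs_nonneg _).trans (hR 1 (one_dvd _))
  calc s.siftedSum
      ≤ s.totalMass * s.mainSum (lambdaSquared (selbergWeight s N)) +
          s.errSum (lambdaSquared (selbergWeight s N)) :=
        siftedSum_le_mainSum_errSum_of_upperMoebius _
          (upperMoebius_lambdaSquared _ (selbergWeight_one hN))
    _ ≤ s.totalMass / selbergSum s N + R * N ^ 2 := by
        rw [mainSum_lambdaSquared_selbergWeight hN, ← div_eq_mul_inv]
        gcongr
        refine (errSum_lambdaSquared_le hR _).trans ?_
        gcongr
        exact sum_abs_selbergWeight_le hN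

end SelbergWeights

section SieveOfInterval

open ArithmeticFunction BoundingSieve Finset UniqueFactorizationMonoid

theorem sum_inv_le_prod_of_subset_factoredNumbers {t S : Finset ℕ}
    (ht : ↑t ⊆ Nat.factoredNumbers S) :
    ∑ m ∈ t, (m : ℝ)⁻¹ ≤ ∏ p ∈ S with p.Prime, (1 - (p : ℝ)⁻¹)⁻¹ := by
  let f : ℕ →* ℝ :=
    { toFun n := (n : ℝ)⁻¹, map_one' := by simp, map_mul' _ _ := by simp [mul_comm] }
  obtain ⟨-, hsum⟩ := EulerProduct.summable_and_hasSum_factoredNumbers_prod_filter_prime_geometric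
    (f := f) (fun {p} hp ↦ by
      simpa [f] using inv_lt_one_of_one_lt₀ (mod_cast hp.one_lt : (1 : ℝ) < p)) S
  replace hsum := hasSum_subtype_iff_indicator.1 hsum
  refine (sum_congr rfl fun m hm ↦ ?_).trans_le (sum_le_hasSum t (fun m _ ↦ ?_) hsum)
  · rw [Set.indicator_of_mem (ht hm)]
    rfl
  · exact Set.indicator_nonneg (fun m _ ↦ inv_nonneg.2 (Nat.cast_nonneg m)) m

theorem div_mem_factoredNumbers_of_radical_eq {n l : ℕ} (hn : n ≠ 0) (hl : radical n = l) :
    n / l ∈ Nat.factoredNumbers l.primeFactors := by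
  have hln : l ∣ n := hl ▸ radical_dvd_self
  have hprimes : l.primeFactors = n.primeFactors := by
    rw [← hl, ← primeFactors_eq_natPrimeFactors, primeFactors_radical]
  have hn0 : n / l ≠ 0 := (Nat.div_pos (Nat.le_of_dvd (Nat.pos_of_ne_zero hn) hln)
    (Nat.pos_of_dvd_of_pos hln (Nat.pos_of_ne_zero hn))).ne'
  rw [Nat.mem_factoredNumbers_iff_primeFactors_subset, hprimes]
  exact ⟨hn0, Nat.primeFactors_mono (Nat.div_dvd_of_dvd hln) hn⟩

theorem sum_inv_of_radical_eq_le (N l : ℕ) :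
    ∑ n ∈ Icc 1 N with radical n = l, (n : ℝ)⁻¹ ≤
      (l : ℝ)⁻¹ * ∏ p ∈ l.primeFactors, (1 - (p : ℝ)⁻¹)⁻¹ := by
  have hmem {n : ℕ} (hn : n ∈ {n ∈ Icc 1 N | radical n = l}) : n ≠ 0 ∧ radical n = l := by
    obtain ⟨hn, hl⟩ := mem_filter.1 hn
    exact ⟨Nat.one_le_iff_ne_zero.1 (mem_Icc.1 hn).1, hl⟩
  have hdvd {n : ℕ} (hn : n ∈ {n ∈ Icc 1 N | radical n = l}) : l ∣ n :=
    (hmem hn).2 ▸ radical_dvd_self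
  have hinj : Set.InjOn (· / l) ({n ∈ Icc 1 N | radical n = l} : Finset ℕ) :=
    fun n hn n' hn' h ↦ (Nat.div_left_inj (hdvd hn) (hdvd hn')).1 h
  have hterm {n : ℕ} (hn : n ∈ {n ∈ Icc 1 N | radical n = l}) :
      (n : ℝ)⁻¹ = (l : ℝ)⁻¹ * ((n / l : ℕ) : ℝ)⁻¹ := by
    rw [← mul_inv, ← Nat.cast_mul, Nat.mul_div_cancel' (hdvd hn)]
  have hsubset : ↑({n ∈ Icc 1 N | radical n = l}.image (· / l)) ⊆
      Nat.factoredNumbers l.primeFactors := by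
    intro m hm
    obtain ⟨n, hn, rfl⟩ := mem_image.1 hm
    exact div_mem_factoredNumbers_of_radical_eq (hmem hn).1 (hmem hn).2
  rw [sum_congr rfl fun n ↦ hterm, ← mul_sum,
    ← sum_image (f := fun m : ℕ ↦ (m : ℝ)⁻¹) hinj]
  gcongr
  exact (sum_inv_le_prod_of_subset_factoredNumbers hsubset).trans_eq <|
    prod_congr (filter_true_of_mem fun _ ↦ Nat.prime_of_mem_primeFactors) fun _ _ ↦ rfl

/-- The sieve problem of removing from the interval `(a, a + y]` the multiples of the primes
`p ≤ N`. -/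
noncomputable def intervalSieve (a y N : ℕ) : BoundingSieve where
  support := Ioc a (a + y)
  prodPrimes := primorial N
  prodPrimes_squarefree := squarefree_primorial N
  weights _ := 1
  weights_nonneg _ := zero_le_one
  totalMass := y
  nu := ⟨fun n ↦ (n : ℝ)⁻¹, by simp⟩
  nu_mult := ⟨by simp, by simp [mul_comm]⟩
  nu_pos_of_prime p hp _ := inv_pos.2 (mod_cast hp.pos)
  nu_lt_one_of_prime p hp _ := inv_lt_one_of_one_lt₀ (mod_cast hp.one_lt)

theorem selbergTerms_intervalSieve (a y N l : ℕ) :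
    (intervalSieve a y N).selbergTerms l =
      (l : ℝ)⁻¹ * ∏ p ∈ l.primeFactors, (1 - (p : ℝ)⁻¹)⁻¹ :=
  selbergTerms_apply (s := intervalSieve a y N) l

theorem harmonic_le_selbergSum_intervalSieve (a y N : ℕ) :
    (harmonic N : ℝ) ≤ selbergSum (intervalSieve a y N) N := by
  have hradical : ∀ n ∈ Icc 1 N, radical n ∈ {l ∈ (primorial N).divisors | l ≤ N} := fun n hn ↦ by
    obtain ⟨hn1, hnN⟩ := mem_Icc.1 hn
    have hle : radical n ≤ N := (Nat.le_of_dvd hn1 radical_dvd_self).trans hnN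
    simpa [hle, (primorial_pos N).ne'] using
      (squarefree_radical (a := n)).dvd_primorial.trans (primorial_dvd_primorial hle)
  calc (harmonic N : ℝ)
      = ∑ n ∈ Icc 1 N, (n : ℝ)⁻¹ := by simp [harmonic_eq_sum_Icc]
    _ = ∑ l ∈ (primorial N).divisors with l ≤ N, ∑ n ∈ Icc 1 N with radical n = l, (n : ℝ)⁻¹ :=
        (sum_fiberwise_of_maps_to hradical _).symm
    _ ≤ selbergSum (intervalSieve a y N) N := sum_le_sum fun l _ ↦ by
        rw [selbergTerms_intervalSieve]
        exact sum_inv_of_radical_eq_le N l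

theorem abs_card_Ioc_filter_dvd_sub_le (a y : ℕ) {d : ℕ} (hd : 0 < d) :
    |(#{n ∈ Ioc a (a + y) | d ∣ n} : ℝ) - y / d| ≤ 1 := by
  have hfloor (x : ℚ) : ((⌊x⌋ : ℤ) : ℝ) ≤ x ∧ (x : ℝ) < ⌊x⌋ + 1 :=
    ⟨mod_cast Int.floor_le x, mod_cast Int.lt_floor_add_one x⟩
  have hcard := Nat.Ioc_filter_modEq_card a (a + y) hd 0
  rw [max_eq_left (sub_nonneg.2 (Int.floor_le_floor (by gcongr; simp)))] at hcard
  simp only [Nat.modEq_zero_iff_dvd] at hcard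
  have hcard' : (#{n ∈ Ioc a (a + y) | d ∣ n} : ℝ) =
      (⌊((a + y : ℕ) - (0 : ℕ)) / (d : ℚ)⌋ : ℝ) - (⌊((a : ℕ) - (0 : ℕ)) / (d : ℚ)⌋ : ℝ) :=
    mod_cast hcard
  have hupper := hfloor (((a + y : ℕ) - (0 : ℕ)) / (d : ℚ))
  have hlower := hfloor (((a : ℕ) - (0 : ℕ)) / (d : ℚ))
  rw [hcard', abs_le]
  push_cast at hupper hlower ⊢
  simp only [sub_zero, add_div] at hupper hlower ⊢
  constructor <;> linarith

theorem abs_rem_intervalSieve_le (a y N : ℕ) {d : ℕ} (hd : d ∣ primorial N) :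
    |(intervalSieve a y N).rem d| ≤ 1 := by
  have hd0 : 0 < d := Nat.pos_of_dvd_of_pos hd (primorial_pos N)
  simpa [intervalSieve, div_eq_inv_mul] using abs_card_Ioc_filter_dvd_sub_le a y hd0

theorem card_filter_prime_Ioc_le {N : ℕ} (hN : N ≠ 0) (a y : ℕ) :
    (#{p ∈ Ioc a (a + y) | p.Prime ∧ N < p} : ℝ) ≤ y / Real.log (N + 1) + N ^ 2 := by
  have hlog : 0 < Real.log (N + 1) := Real.log_pos (by simpa [Nat.pos_iff_ne_zero] using hN)
  have hS : Real.log (N + 1) ≤ selbergSum (intervalSieve a y N) N :=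
    le_trans (by exact_mod_cast log_add_one_le_harmonic N)
      (harmonic_le_selbergSum_intervalSieve a y N)
  have hcoprime : ∀ p, p.Prime ∧ N < p → (primorial N).Coprime p := fun p ⟨hp, hNp⟩ ↦ by
    rw [Nat.coprime_comm, hp.coprime_iff_not_dvd, hp.dvd_primorial_iff]
    exact hNp.not_ge
  have hsifted : (#{p ∈ Ioc a (a + y) | p.Prime ∧ N < p} : ℝ) ≤
      (intervalSieve a y N).siftedSum := by
    rw [siftedSum, ← sum_filter, ← nsmul_one, ← sum_const]
    exact sum_le_sum_of_subset_of_nonneg (monotone_filter_right _ fun p _ ↦ hcoprime p)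
      fun _ _ _ ↦ zero_le_one
  calc (#{p ∈ Ioc a (a + y) | p.Prime ∧ N < p} : ℝ)
      ≤ y / selbergSum (intervalSieve a y N) N + 1 * N ^ 2 :=
        hsifted.trans <| siftedSum_le_div_selbergSum_add hN fun d ↦ abs_rem_intervalSieve_le a y N
    _ ≤ y / Real.log (N + 1) + N ^ 2 := by
        rw [one_mul]
        gcongr

end SieveOfInterval

section PartialSummation

open Finset

theorem sum_mul_le_sum_mul_add_of_antitone {w f g : ℕ → ℝ} {R : ℝ} {n : ℕ} (hw : Antitone w)
    (hw0 : ∀ i, 0 ≤ w i) (h : ∀ l ≤ n, ∑ i ∈ range l, f i ≤ ∑ i ∈ range l, g i + R) :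
    ∑ i ∈ range n, w i * f i ≤ ∑ i ∈ range n, w i * g i + R * w 0 := by
  have hparts : ∀ l ≤ n, ∑ i ∈ range l, w i * f i - ∑ i ∈ range l, w i * g i ≤
      R * (w 0 - w l) + w l * (∑ i ∈ range l, f i - ∑ i ∈ range l, g i) := by
    intro l hl
    induction l with
    | zero => simp
    | succ l ih =>
      have hstep := mul_nonneg (sub_nonneg.2 (hw l.le_succ)) (sub_nonneg.2 (h (l + 1) hl))
      simp only [sum_range_succ] at hstep ⊢
      linarith [ih (Nat.le_of_succ_le hl)]
  linarith [hparts n le_rfl, mul_nonneg (hw0 n) (sub_nonneg.2 (h n le_rfl))]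

theorem sum_inv_add_half_le_log {x : ℝ} (hx : 0 < x) (n : ℕ) :
    ∑ i ∈ range n, 1 / (x + i + 1 / 2) ≤ Real.log ((x + n) / x) := by
  have hterm (i : ℕ) :
      1 / (x + i + 1 / 2) ≤ Real.log (x + (i + 1 : ℕ)) - Real.log (x + i) := by
    have hxi : 0 < x + i := by positivity
    calc 1 / (x + i + 1 / 2) = 2 * (1 / (x + i)) / (1 / (x + i) + 2) := by field_simp; ring
      _ ≤ Real.log (1 + 1 / (x + i)) := Real.le_log_one_add_of_nonneg (by positivity)
      _ = Real.log (x + (i + 1 : ℕ)) - Real.log (x + i) := by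
          rw [← Real.log_div (by positivity) hxi.ne']
          congr 1
          push_cast
          field_simp
          ring
  calc ∑ i ∈ range n, 1 / (x + i + 1 / 2)
      ≤ ∑ i ∈ range n, (Real.log (x + (i + 1 : ℕ)) - Real.log (x + i)) :=
        sum_le_sum fun i _ ↦ hterm i
    _ = Real.log ((x + n) / x) := by
        rw [sum_range_sub (fun i : ℕ ↦ Real.log (x + i)), Real.log_div (by positivity) hx.ne']
        simp

end PartialSummation

section PrimeOffsets

open Finset

/-- `k` is the offset below `m` of a prime `m - k` in the interval `(m / 2, m]`. -/
def IsPrimeOffset (m k : ℕ) : Prop := 2 * k < m ∧ (m - k).Prime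

instance (m : ℕ) : DecidablePred (IsPrimeOffset m) := fun _ ↦ instDecidableAnd

/-- The part of `∑ 1 / (x - p)` with `x = m + 1 / 2` that comes from the primes `p = m - k` with
`k ∈ s`. -/
noncomputable def offsetSum (m : ℕ) (s : Finset ℕ) : ℝ :=
  ∑ k ∈ s with IsPrimeOffset m k, 1 / ((k : ℝ) + 1 / 2)

theorem offsetSum_mono (m : ℕ) : Monotone (offsetSum m) := fun _ _ hst ↦
  sum_le_sum_of_subset_of_nonneg (filter_subset_filter _ hst) fun _ _ _ ↦ by positivity

theorem offsetSum_range_add_Ico (m : ℕ) {a b : ℕ} (hab : a ≤ b) :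
    offsetSum m (range a) + offsetSum m (Ico a b) = offsetSum m (range b) := by
  simp only [offsetSum, sum_filter, sum_range_add_sum_Ico _ hab]

theorem tsum_prime_eq_offsetSum {m n : ℕ} (hmn : m ≤ 2 * n) :
    (∑' p : ℕ, if p.Prime ∧ ((m : ℝ) + 1 / 2) / 2 < p ∧ (p : ℝ) < m + 1 / 2 then
      1 / ((m : ℝ) + 1 / 2 - p) else 0) = offsetSum m (range n) := by
  have hiff (p : ℕ) : (p.Prime ∧ ((m : ℝ) + 1 / 2) / 2 < p ∧ (p : ℝ) < m + 1 / 2) ↔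
      p.Prime ∧ m < 2 * p ∧ p ≤ m := by
    refine and_congr_right fun _ ↦ and_congr ⟨fun h ↦ ?_, fun h ↦ ?_⟩ ⟨fun h ↦ ?_, fun h ↦ ?_⟩
    · exact_mod_cast (by linarith : (m : ℝ) < 2 * p)
    · have : (m : ℝ) + 1 ≤ 2 * p := mod_cast h
      linarith
    · exact Nat.lt_succ_iff.1 (by exact_mod_cast (by linarith : (p : ℝ) < m + 1))
    · have : (p : ℝ) ≤ m := mod_cast h
      linarith
  simp only [hiff]
  rw [tsum_eq_sum (s := {p ∈ range (m + 1) | p.Prime ∧ m < 2 * p ∧ p ≤ m}) fun p hp ↦ if_neg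
    fun h ↦ hp (mem_filter.2 ⟨mem_range_succ_iff.2 h.2.2, h⟩), offsetSum]
  refine sum_nbij' (m - ·) (m - ·) (fun p hp ↦ ?_) (fun k hk ↦ ?_) (fun p hp ↦ ?_) (fun k hk ↦ ?_)
    fun p hp ↦ ?_
  all_goals simp only [mem_filter, mem_range] at *
  · exact ⟨by omega, by omega, (Nat.sub_sub_self hp.2.2.2).symm ▸ hp.2.1⟩
  · obtain ⟨-, hkm, hprime⟩ := hk
    exact ⟨by omega, hprime, by omega, by omega⟩
  · exact Nat.sub_sub_self hp.2.2.2
  · exact Nat.sub_sub_self (by have := hk.2.1; omega)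
  · rw [if_pos hp.2, Nat.cast_sub hp.2.2.2]
    congr 1
    ring

theorem card_isPrimeOffset_Ico_le (m a l : ℕ) :
    #{k ∈ Ico a (a + l) | IsPrimeOffset m k} ≤
      #{p ∈ Ioc (m - (a + l)) (m - (a + l) + l) | p.Prime ∧ m < 2 * p ∧ a < p} := by
  refine card_le_card_of_injOn (m - ·) (fun k hk ↦ ?_) fun k hk k' hk' h ↦ ?_
  · obtain ⟨hkI, hkm, hp⟩ := mem_filter.1 hk
    rw [mem_Ico] at hkI
    refine mem_filter.2 ⟨mem_Ioc.2 ?_, hp, ?_, ?_⟩ <;> dsimp only <;> omega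
  · obtain ⟨-, hkm, -⟩ := mem_filter.1 hk
    obtain ⟨-, hkm', -⟩ := mem_filter.1 hk'
    dsimp only at h
    omega

theorem coprime_of_prime_of_lt_two_mul {m p q : ℕ} (hq : ∀ r ∈ q.primeFactors, 2 * r ≤ m)
    (hq0 : q ≠ 0) (hp : p.Prime) (hmp : m < 2 * p) : q.Coprime p := by
  rw [Nat.coprime_comm, hp.coprime_iff_not_dvd]
  exact fun hpq ↦ (hq p (hp.mem_primeFactors hpq hq0)).not_gt hmp

theorem card_isPrimeOffset_Ico_le_totient {m q : ℕ} (hq : ∀ r ∈ q.primeFactors, 2 * r ≤ m)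
    (hq0 : q ≠ 0) (a : ℕ) : #{k ∈ Ico a (a + q) | IsPrimeOffset m k} ≤ q.totient := by
  refine (card_isPrimeOffset_Ico_le m a q).trans ?_
  rw [← Nat.filter_coprime_Ico_eq_totient q (m - (a + q) + 1), add_right_comm,
    Ico_add_one_add_one_eq_Ioc]
  exact card_le_card <| monotone_filter_right _ fun p _ hp ↦
    coprime_of_prime_of_lt_two_mul hq hq0 hp.1 hp.2.1

theorem offsetSum_Ico_le_card_div {a : ℕ} (ha : a ≠ 0) (m b : ℕ) :
    offsetSum m (Ico a b) ≤ #{k ∈ Ico a b | IsPrimeOffset m k} / a := by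
  rw [offsetSum, div_eq_mul_one_div (_ : ℝ) (a : ℝ), ← nsmul_eq_mul]
  refine sum_le_card_nsmul _ _ _ fun k hk ↦ one_div_le_one_div_of_le (by positivity) ?_
  have hak : (a : ℝ) ≤ k := mod_cast (mem_Ico.1 (mem_filter.1 hk).1).1
  linarith

theorem offsetSum_range_mul_succ_le {m q : ℕ} (hq : ∀ r ∈ q.primeFactors, 2 * r ≤ m)
    (hq0 : q ≠ 0) (M : ℕ) :
    offsetSum m (range (q * (M + 1))) ≤ offsetSum m (range q) + q.totient / q * harmonic M := by
  induction M with
  | zero => simp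
  | succ M ih =>
    have hcard : (#{k ∈ Ico (q * (M + 1)) (q * (M + 1) + q) | IsPrimeOffset m k} : ℝ) ≤
        q.totient := mod_cast card_isPrimeOffset_Ico_le_totient hq hq0 _
    calc offsetSum m (range (q * (M + 1 + 1)))
        = offsetSum m (range (q * (M + 1))) +
            offsetSum m (Ico (q * (M + 1)) (q * (M + 1) + q)) := by
          rw [offsetSum_range_add_Ico m (Nat.le_add_right _ q), mul_add_one q (M + 1)]
      _ ≤ (offsetSum m (range q) + q.totient / q * harmonic M) +
            q.totient / ((q * (M + 1) : ℕ) : ℝ) := by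
          grw [ih, offsetSum_Ico_le_card_div (mul_ne_zero hq0 M.succ_ne_zero), hcard]
      _ = offsetSum m (range q) + q.totient / q * harmonic (M + 1) := by
          rw [harmonic_succ]
          push_cast
          field_simp
          ring

theorem offsetSum_Ico_le_log_div_log_add {m N a b : ℕ} (hN : N ≠ 0) (hNa : N ≤ a) (hab : a ≤ b) :
    offsetSum m (Ico a b) ≤ Real.log (b / a) / Real.log (N + 1) + N ^ 2 / a := by
  obtain ⟨n, rfl⟩ := Nat.exists_eq_add_of_le hab
  have ha : (0 : ℝ) < a := mod_cast (Nat.pos_of_ne_zero hN).trans_le hNa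
  have hlog : 0 < Real.log (N + 1) := Real.log_pos (by simpa [Nat.pos_iff_ne_zero] using hN)
  have hcount (l : ℕ) : ∑ i ∈ range l, (if IsPrimeOffset m (a + i) then (1 : ℝ) else 0) ≤
      ∑ _i ∈ range l, (Real.log (N + 1))⁻¹ + N ^ 2 := by
    have hsieve := card_filter_prime_Ioc_le hN (m - (a + l)) l
    calc ∑ i ∈ range l, (if IsPrimeOffset m (a + i) then (1 : ℝ) else 0)
        = #{k ∈ Ico a (a + l) | IsPrimeOffset m k} := by
          rw [← sum_boole, sum_Ico_eq_sum_range, Nat.add_sub_cancel_left]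
      _ ≤ #{p ∈ Ioc (m - (a + l)) (m - (a + l) + l) | p.Prime ∧ N < p} := by
          refine mod_cast (card_isPrimeOffset_Ico_le m a l).trans <| card_le_card <|
            monotone_filter_right _ fun p _ hp ↦ ⟨hp.1, hNa.trans_lt hp.2.2⟩
      _ ≤ ∑ _i ∈ range l, (Real.log (N + 1))⁻¹ + N ^ 2 := by
          simpa [div_eq_mul_inv] using hsieve
  have hw : Antitone fun i : ℕ ↦ 1 / ((a : ℝ) + i + 1 / 2) := fun i j hij ↦ by
    dsimp only
    gcongr
  calc offsetSum m (Ico a (a + n))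
      = ∑ i ∈ range n, 1 / ((a : ℝ) + i + 1 / 2) * if IsPrimeOffset m (a + i) then 1 else 0 := by
        rw [offsetSum, sum_filter, sum_Ico_eq_sum_range, Nat.add_sub_cancel_left]
        simp
    _ ≤ ∑ i ∈ range n, 1 / ((a : ℝ) + i + 1 / 2) * (Real.log (N + 1))⁻¹ +
          N ^ 2 * (1 / ((a : ℝ) + (0 : ℕ) + 1 / 2)) :=
        sum_mul_le_sum_mul_add_of_antitone hw (fun i ↦ by positivity) fun l _ ↦ hcount l
    _ ≤ Real.log (((a + n : ℕ) : ℝ) / a) / Real.log (N + 1) + N ^ 2 / a := by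
        rw [← sum_mul, ← div_eq_mul_inv, mul_one_div, Nat.cast_add]
        gcongr
        · exact sum_inv_add_half_le_log ha n
        · simp

theorem two_mul_le_of_mem_primeFactors_thirty {m : ℕ} (hm : 10 ≤ m) :
    ∀ r ∈ Nat.primeFactors 30, 2 * r ≤ m := fun r hr ↦ by
  have hle : ∀ r ∈ Nat.primeFactors 30, r ≤ 5 := by decide +kernel
  have := hle r hr
  omega

theorem sum_coprime_thirty_le : ∀ r < 30,
    ∑ k ∈ range 30 with Nat.Coprime 30 (r + 30 - k), 1 / ((k : ℚ) + 1 / 2) ≤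
      1284699552 / 444215525 := by
  decide +kernel

theorem sum_isPrimeOffset_lt_ten_le : ∀ m < 10, 3 ≤ m →
    ∑ k ∈ range 30 with IsPrimeOffset m k, 1 / ((k : ℚ) + 1 / 2) ≤ 1284699552 / 444215525 := by
  decide +kernel

/-- The bound is attained when `m % 30 = 19`, by the offsets `0, 2, 6, 8, 12, 18, 20, 26`. -/
theorem offsetSum_range_thirty_le {m : ℕ} (hm : 3 ≤ m) :
    offsetSum m (range 30) ≤ 1284699552 / 444215525 := by
  rcases lt_or_ge m 10 with hm10 | hm10
  · have h := sum_isPrimeOffset_lt_ten_le m hm10 hm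
    rw [← Rat.cast_le (K := ℝ)] at h
    push_cast at h
    exact h
  · have hcoprime : ∀ k ∈ range 30, IsPrimeOffset m k → Nat.Coprime 30 (m % 30 + 30 - k) := by
      intro k hk ⟨hkm, hp⟩
      have hmod : (m % 30 + 30 - k) % 30 = (m - k) % 30 := by
        have := mem_range.1 hk
        omega
      rw [Nat.coprime_comm, Nat.Coprime, Nat.ModEq.gcd_eq hmod, ← Nat.Coprime, Nat.coprime_comm]
      exact coprime_of_prime_of_lt_two_mul (two_mul_le_of_mem_primeFactors_thirty hm10)
        (by norm_num) hp (by omega)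
    have h := sum_coprime_thirty_le (m % 30) (Nat.mod_lt _ (by norm_num))
    rw [← Rat.cast_le (K := ℝ)] at h
    push_cast at h
    refine le_trans (sum_le_sum_of_subset_of_nonneg ?_ fun _ _ _ ↦ by positivity) h
    exact monotone_filter_right _ hcoprime

theorem offsetSum_range_thirty_mul_le {m : ℕ} (hm : 10 ≤ m) (M : ℕ) :
    offsetSum m (range (30 * (M + 1))) ≤
      offsetSum m (range 30) + 4 / 15 * (1 + Real.log M) := by
  have hφ : ((Nat.totient 30 : ℕ) : ℝ) / (30 : ℕ) = 4 / 15 := by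
    rw [show Nat.totient 30 = 8 by decide +kernel]
    norm_num
  refine (offsetSum_range_mul_succ_le (two_mul_le_of_mem_primeFactors_thirty hm)
    (by norm_num) M).trans ?_
  rw [hφ]
  gcongr
  exact harmonic_le_one_add_log M

end PrimeOffsets

section Blocks

open Finset

/-- The left endpoints of the blocks `[2 ^ (j (j + 1) / 2), 2 ^ ((j + 1) (j + 2) / 2))` of offsets.
Their number grows like the square root of the logarithm, so a bound `O(1 / j)` on each of them
adds up to `O(log log m)`. -/
def blockStart (j : ℕ) : ℕ := 2 ^ (j + 1).choose 2

theorem blockStart_pos (j : ℕ) : 0 < blockStart j := Nat.two_pow_pos _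

theorem blockStart_succ (j : ℕ) : blockStart (j + 1) = 2 ^ (j + 1) * blockStart j := by
  rw [blockStart, Nat.choose_succ_succ', Nat.choose_one_right, pow_add, blockStart]

theorem blockStart_strictMono : StrictMono blockStart := strictMono_nat_of_lt_succ fun j ↦ by
  rw [blockStart_succ]
  exact lt_mul_left (blockStart_pos j) (Nat.one_lt_two_pow j.succ_ne_zero)

theorem two_mul_choose_succ_two (j : ℕ) : 2 * (j + 1).choose 2 = j * (j + 1) := by
  have h := Nat.add_one_mul_choose_eq j 1
  rw [Nat.choose_one_right] at h
  linarith

theorem two_pow_sq_div_four_le_blockStart (j : ℕ) : 2 ^ (j ^ 2 / 4) ≤ blockStart j := by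
  refine Nat.pow_le_pow_right two_pos ?_
  have := two_mul_choose_succ_two j
  have := Nat.div_mul_le_self (j ^ 2) 4
  nlinarith

theorem two_pow_sq_div_four_pow_le (j : ℕ) :
    (2 ^ (j ^ 2 / 4)) ^ 4 * 2 ^ j ≤ blockStart j ^ 2 := by
  rw [blockStart, ← pow_mul, ← pow_mul, ← pow_add]
  refine Nat.pow_le_pow_right two_pos ?_
  have := two_mul_choose_succ_two j
  have := Nat.div_mul_le_self (j ^ 2) 4
  linarith

theorem two_pow_sq_div_four_sq_div_le (j : ℕ) :
    ((2 ^ (j ^ 2 / 4) : ℕ) : ℝ) ^ 2 / blockStart j ≤ (5 / 7) ^ j := by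
  have ha : (0 : ℝ) < blockStart j := mod_cast blockStart_pos j
  have hle : ((2 ^ (j ^ 2 / 4) : ℕ) : ℝ) ^ 4 * 2 ^ j ≤ (blockStart j : ℝ) ^ 2 :=
    mod_cast two_pow_sq_div_four_pow_le j
  rw [← sq_le_sq₀ (by positivity) (by positivity)]
  calc (((2 ^ (j ^ 2 / 4) : ℕ) : ℝ) ^ 2 / blockStart j) ^ 2
      = ((2 ^ (j ^ 2 / 4) : ℕ) : ℝ) ^ 4 / (blockStart j : ℝ) ^ 2 := by rw [div_pow, ← pow_mul]
    _ ≤ (1 / 2) ^ j := by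
        rw [div_le_iff₀ (by positivity), one_div, inv_pow, ← div_eq_inv_mul,
          le_div_iff₀ (by positivity)]
        exact hle
    _ ≤ ((5 / 7) ^ 2) ^ j := by
        gcongr
        norm_num
    _ = ((5 / 7) ^ j) ^ 2 := pow_right_comm _ _ _

theorem sq_sub_one_mul_log_two_le_log (j : ℕ) :
    ((j : ℝ) ^ 2 - 1) / 4 * Real.log 2 ≤ Real.log ((2 ^ (j ^ 2 / 4) : ℕ) + 1) := by
  have hmod : j ^ 2 ≤ 4 * (j ^ 2 / 4) + 1 := by
    have : j ^ 2 % 4 ≤ 1 := by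
      have := Nat.mod_lt j four_pos
      rw [Nat.pow_mod]
      interval_cases j % 4 <;> norm_num
    omega
  have hfloor : ((j : ℝ) ^ 2 - 1) / 4 ≤ (j ^ 2 / 4 : ℕ) := by
    have : (j : ℝ) ^ 2 ≤ 4 * (j ^ 2 / 4 : ℕ) + 1 := mod_cast hmod
    linarith
  calc ((j : ℝ) ^ 2 - 1) / 4 * Real.log 2
      ≤ (j ^ 2 / 4 : ℕ) * Real.log 2 := by gcongr
    _ = Real.log (2 ^ (j ^ 2 / 4) : ℕ) := by rw [Nat.cast_pow, Nat.cast_two, Real.log_pow]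
    _ ≤ Real.log ((2 ^ (j ^ 2 / 4) : ℕ) + 1) := by
        gcongr
        exact le_add_of_nonneg_right zero_le_one

theorem offsetSum_block_le (m : ℕ) {j : ℕ} (hj : 2 ≤ j) :
    offsetSum m (Ico (blockStart j) (blockStart (j + 1))) ≤ 4 / (j - 1) + (5 / 7) ^ j := by
  have hj1 : (0 : ℝ) < j - 1 := sub_pos.2 (mod_cast hj)
  have ha : (blockStart j : ℝ) ≠ 0 := mod_cast (blockStart_pos j).ne'
  have hratio : (blockStart (j + 1) : ℝ) / blockStart j = 2 ^ (j + 1) := by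
    rw [blockStart_succ, Nat.cast_mul, mul_div_cancel_right₀ _ ha, Nat.cast_pow, Nat.cast_two]
  calc offsetSum m (Ico (blockStart j) (blockStart (j + 1)))
      ≤ Real.log (blockStart (j + 1) / blockStart j) / Real.log ((2 ^ (j ^ 2 / 4) : ℕ) + 1) +
          ((2 ^ (j ^ 2 / 4) : ℕ) : ℝ) ^ 2 / blockStart j :=
        offsetSum_Ico_le_log_div_log_add (by positivity) (two_pow_sq_div_four_le_blockStart j)
          (blockStart_strictMono j.lt_succ_self).le
    _ ≤ (j + 1) * Real.log 2 / (((j : ℝ) ^ 2 - 1) / 4 * Real.log 2) + (5 / 7) ^ j := by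
        have hpos : 0 < ((j : ℝ) ^ 2 - 1) / 4 * Real.log 2 :=
          mul_pos (by nlinarith) (Real.log_pos one_lt_two)
        rw [hratio, Real.log_pow, Nat.cast_add_one]
        gcongr
        · exact sq_sub_one_mul_log_two_le_log j
        · exact two_pow_sq_div_four_sq_div_le j
    _ = 4 / (j - 1) + (5 / 7) ^ j := by
        rw [show (j : ℝ) ^ 2 - 1 = (j + 1) * (j - 1) by ring]
        field_simp

theorem offsetSum_range_blockStart_add (m j n : ℕ) :
    offsetSum m (range (blockStart (j + n))) = offsetSum m (range (blockStart j)) +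
      ∑ i ∈ range n, offsetSum m (Ico (blockStart (j + i)) (blockStart (j + i + 1))) := by
  induction n with
  | zero => simp
  | succ n ih =>
    rw [sum_range_succ, ← add_assoc (offsetSum _ _), ← ih, ← add_assoc j n 1,
      offsetSum_range_add_Ico m (blockStart_strictMono (j + n).lt_succ_self).le]

theorem offsetSum_range_blockStart_add_le (m : ℕ) {j : ℕ} (hj : 2 ≤ j) (n : ℕ) :
    offsetSum m (range (blockStart (j + n))) ≤ offsetSum m (range (blockStart j)) +
      (4 * Real.log ((j - 3 / 2 + n) / (j - 3 / 2)) + 7 / 2 * (5 / 7) ^ j) := by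
  have hx : (0 : ℝ) < j - 3 / 2 := by
    have : (2 : ℝ) ≤ j := mod_cast hj
    linarith
  have hblock (i : ℕ) : offsetSum m (Ico (blockStart (j + i)) (blockStart (j + i + 1))) ≤
      4 * (1 / ((j : ℝ) - 3 / 2 + i + 1 / 2)) + (5 / 7) ^ j * (5 / 7) ^ i := by
    refine (offsetSum_block_le m (by omega)).trans_eq ?_
    rw [pow_add, mul_one_div]
    congr 2
    push_cast
    ring
  have hgeom : ∑ i ∈ range n, (5 / 7 : ℝ) ^ i ≤ 7 / 2 := by
    rw [geom_sum_eq (by norm_num), div_le_iff_of_neg (by norm_num)]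
    have : (0 : ℝ) ≤ (5 / 7) ^ n := by positivity
    linarith
  rw [offsetSum_range_blockStart_add]
  gcongr
  calc ∑ i ∈ range n, offsetSum m (Ico (blockStart (j + i)) (blockStart (j + i + 1)))
      ≤ ∑ i ∈ range n, (4 * (1 / ((j : ℝ) - 3 / 2 + i + 1 / 2)) + (5 / 7) ^ j * (5 / 7) ^ i) :=
        sum_le_sum fun i _ ↦ hblock i
    _ ≤ 4 * Real.log ((j - 3 / 2 + n) / (j - 3 / 2)) + (5 / 7) ^ j * (7 / 2) := by
        rw [sum_add_distrib, ← mul_sum, ← mul_sum]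
        gcongr
        exact sum_inv_add_half_le_log hx n
    _ = 4 * Real.log ((j - 3 / 2 + n) / (j - 3 / 2)) + 7 / 2 * (5 / 7) ^ j := by
        rw [mul_comm ((5 / 7 : ℝ) ^ j)]

end Blocks

section Assembly

open Finset

theorem one_lt_log_add_half {m : ℕ} (hm : 3 ≤ m) : 1 < Real.log (m + 1 / 2) := by
  rw [Real.lt_log_iff_exp_lt (by positivity)]
  have : (3 : ℝ) ≤ m := mod_cast hm
  linarith [Real.exp_one_lt_three]

theorem four_add_log_le_log_add_half {m M : ℕ} (hM : M ≠ 0) (hMm : 60 * M ≤ m) :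
    4 + Real.log M ≤ Real.log (m + 1 / 2) := by
  have hM0 : (0 : ℝ) < M := mod_cast Nat.pos_of_ne_zero hM
  have hle : (60 : ℝ) * M ≤ m + 1 / 2 := by
    have : (60 : ℝ) * M ≤ m := mod_cast hMm
    linarith
  have hlog60 : 4 ≤ Real.log 60 := by
    rw [show (60 : ℝ) = 2 ^ 2 * 3 * 5 by norm_num, Real.log_mul (by norm_num) (by norm_num),
      Real.log_mul (by norm_num) (by norm_num), Real.log_pow, Nat.cast_two]
    linarith [Real.log_two_gt_d9, Real.log_three_gt_d9, Real.log_five_gt_d9]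
  calc 4 + Real.log M ≤ Real.log 60 + Real.log M := by gcongr
    _ = Real.log (60 * M) := (Real.log_mul (by norm_num) hM0.ne').symm
    _ ≤ Real.log (m + 1 / 2) := Real.log_le_log (by positivity) hle

theorem four_fifteenths_mul_one_add_le_two_mul_log {L : ℝ} (hL : 0 ≤ L) (hL' : L ≤ 12) :
    4 / 15 * (1 + L) ≤ 2 * Real.log (4 + L) := by
  have hlog4 : Real.log 4 = 2 * Real.log 2 := by
    rw [show (4 : ℝ) = 2 ^ 2 by norm_num, Real.log_pow, Nat.cast_two]
  have htangent : 1 - (1 + L / 4)⁻¹ ≤ Real.log (1 + L / 4) :=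
    Real.one_sub_inv_le_log_of_pos (by positivity)
  have hquad : 4 / 15 * (1 + L) ≤ 4 * (69 / 100) + 2 * (1 - (1 + L / 4)⁻¹) := by
    rw [show 2 * (1 - (1 + L / 4)⁻¹) = 2 * L / (4 + L) by field_simp; ring,
      ← sub_le_iff_le_add', le_div_iff₀ (by positivity)]
    nlinarith
  rw [show 4 + L = 4 * (1 + L / 4) by ring, Real.log_mul (by norm_num) (by positivity), hlog4]
  linarith [Real.log_two_gt_d9]

theorem exists_offsetSum_range_le_of_le {m : ℕ} (hm : 3 ≤ m) (hm' : m ≤ 2 ^ 22) :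
    ∃ n, m ≤ 2 * n ∧ offsetSum m (range n) ≤
      offsetSum m (range 30) + 2 * Real.log (Real.log (m + 1 / 2)) := by
  refine ⟨30 * (m / 60 + 1), by omega, ?_⟩
  rcases Nat.eq_zero_or_pos (m / 60) with hM | hM
  · have := Real.log_nonneg (one_lt_log_add_half hm).le
    simpa [hM] using this
  · have hM1 : (1 : ℝ) ≤ (m / 60 : ℕ) := mod_cast hM
    have hL : Real.log (m / 60 : ℕ) ≤ 12 := by
      have : ((m / 60 : ℕ) : ℝ) ≤ 2 ^ 17 := mod_cast (by omega : m / 60 ≤ 2 ^ 17)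
      have := Real.log_le_log (by positivity) this
      rw [Real.log_pow] at this
      push_cast at this
      linarith [Real.log_two_lt_d9]
    have hlog : 4 + Real.log (m / 60 : ℕ) ≤ Real.log (m + 1 / 2) :=
      four_add_log_le_log_add_half hM.ne' (Nat.mul_div_le m 60)
    calc offsetSum m (range (30 * (m / 60 + 1)))
        ≤ offsetSum m (range 30) + 4 / 15 * (1 + Real.log (m / 60 : ℕ)) :=
          offsetSum_range_thirty_mul_le (by omega) _
      _ ≤ offsetSum m (range 30) + 2 * Real.log (4 + Real.log (m / 60 : ℕ)) := by
          refine add_le_add_right ?_ _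
          exact four_fifteenths_mul_one_add_le_two_mul_log (Real.log_nonneg hM1) hL
      _ ≤ offsetSum m (range 30) + 2 * Real.log (Real.log (m + 1 / 2)) := by
          have := Real.log_nonneg hM1
          gcongr

theorem offsetSum_range_blockStart_six_le {m : ℕ} (hm : 10 ≤ m) :
    offsetSum m (range (blockStart 6)) ≤
      offsetSum m (range 30) + 4 / 15 * (1 + 21 * Real.log 2 - Real.log 30) := by
  have hsub : range (blockStart 6) ⊆ range (30 * (69905 + 1)) := by
    rw [range_subset_range]
    decide +kernel
  have hlog : Real.log (69905 : ℕ) ≤ 21 * Real.log 2 - Real.log 30 := by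
    rw [← Nat.cast_ofNat (n := 21), ← Real.log_pow, ← Real.log_div (by norm_num) (by norm_num)]
    exact Real.log_le_log (by norm_num) (by norm_num)
  calc offsetSum m (range (blockStart 6))
      ≤ offsetSum m (range 30) + 4 / 15 * (1 + Real.log (69905 : ℕ)) :=
        (offsetSum_mono m hsub).trans (offsetSum_range_thirty_mul_le hm 69905)
    _ ≤ offsetSum m (range 30) + 4 / 15 * (1 + 21 * Real.log 2 - Real.log 30) := by
        rw [add_sub_assoc]
        gcongr

theorem sq_div_three_le_log {m j : ℕ} (hm : 2 * blockStart j < m) :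
    ((j : ℝ) - 1 / 2) ^ 2 / 3 ≤ Real.log (m + 1 / 2) := by
  have hchoose : 2 * (((j + 1).choose 2 : ℕ) : ℝ) = j * (j + 1) :=
    mod_cast two_mul_choose_succ_two j
  have hle : (2 : ℝ) ^ ((j + 1).choose 2 + 1) ≤ m + 1 / 2 := by
    rw [blockStart, ← pow_succ'] at hm
    have : (2 : ℝ) ^ ((j + 1).choose 2 + 1) < m := mod_cast hm
    linarith
  calc ((j : ℝ) - 1 / 2) ^ 2 / 3
      ≤ (((j + 1).choose 2 : ℕ) + 1) * Real.log 2 := by nlinarith [Real.log_two_gt_d9]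
    _ = Real.log (2 ^ ((j + 1).choose 2 + 1)) := by rw [Real.log_pow, Nat.cast_add_one]
    _ ≤ Real.log (m + 1 / 2) := Real.log_le_log (by positivity) hle

theorem four_fifteenths_mul_one_add_log_sub_log_add_le :
    4 / 15 * (1 + 21 * Real.log 2 - Real.log 30) + 7 / 2 * (5 / 7) ^ 6 ≤
      4 * Real.log (9 / 2) - 2 * Real.log 3 := by
  have h30 : Real.log 30 = Real.log 2 + Real.log 3 + Real.log 5 := by
    rw [← Real.log_mul (by norm_num) (by norm_num), ← Real.log_mul (by norm_num) (by norm_num)]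
    norm_num
  have h92 : Real.log (9 / 2) = 2 * Real.log 3 - Real.log 2 := by
    rw [Real.log_div (by norm_num) (by norm_num), show (9 : ℝ) = 3 ^ 2 by norm_num, Real.log_pow,
      Nat.cast_two]
  rw [h30, h92]
  linarith [Real.log_two_lt_d9, Real.log_three_gt_d9, Real.log_five_gt_d9]

theorem exists_offsetSum_range_le_of_lt {m : ℕ} (hm : 2 ^ 22 < m) :
    ∃ n, m ≤ 2 * n ∧ offsetSum m (range n) ≤
      offsetSum m (range 30) + 2 * Real.log (Real.log (m + 1 / 2)) := by
  have hmono : StrictMono fun i ↦ 2 * blockStart (6 + i) := fun i i' hi ↦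
    Nat.mul_lt_mul_of_pos_left (blockStart_strictMono (Nat.add_lt_add_left hi 6)) two_pos
  obtain ⟨i, hi, hi'⟩ := hmono.exists_between_of_tendsto_atTop hmono.tendsto_atTop
    (show 2 * blockStart (6 + 0) < m from hm)
  have hloglog : 4 * Real.log (i + 11 / 2) - 2 * Real.log 3 ≤
      2 * Real.log (Real.log (m + 1 / 2)) := by
    have hlog := sq_div_three_le_log hi
    rw [show ((6 + i : ℕ) : ℝ) - 1 / 2 = i + 11 / 2 by push_cast; ring] at hlog
    have hloglog := Real.log_le_log (by positivity) hlog
    rw [Real.log_div (by positivity) three_ne_zero, Real.log_pow, Nat.cast_two] at hloglog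
    linarith
  have hblocks := offsetSum_range_blockStart_add_le m (show 2 ≤ 6 by norm_num) (i + 1)
  rw [show ((6 : ℕ) - 3 / 2 + (i + 1 : ℕ) : ℝ) / ((6 : ℕ) - 3 / 2) = (i + 11 / 2) / (9 / 2) by
    push_cast; ring, Real.log_div (by positivity) (by norm_num)] at hblocks
  refine ⟨blockStart (6 + (i + 1)), hi', ?_⟩
  linarith [offsetSum_range_blockStart_six_le (show 10 ≤ m by omega),
    four_fifteenths_mul_one_add_log_sub_log_add_le]

end Assembly

/-- The lower sum over primes: `∑_{x/2 < p < x} 1/(x-p) ≤ C + 2 log log x`. -/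
theorem lower_prime_sum_bound (x : ℝ)
    (hx : ∃ m : ℕ, 0 < m ∧ x = m + 1 / 2) (hx' : 3.5 ≤ x) :
    (∑' p : ℕ, if p.Prime ∧ x / 2 < (p : ℝ) ∧ (p : ℝ) < x then
        1 / (x - p) else 0)
    ≤ (1284699552 : ℝ) / 444215525 + 2 * Real.log (Real.log x) := by
  obtain ⟨m, -, rfl⟩ := hx
  have hm : 3 ≤ m := by
    norm_num at hx'
    exact_mod_cast (by linarith : (3 : ℝ) ≤ m)
  obtain ⟨n, hmn, hn⟩ : ∃ n, m ≤ 2 * n ∧ offsetSum m (Finset.range n) ≤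
      offsetSum m (Finset.range 30) + 2 * Real.log (Real.log (m + 1 / 2)) :=
    (le_or_gt m (2 ^ 22)).elim (exists_offsetSum_range_le_of_le hm)
      exists_offsetSum_range_le_of_lt
  rw [tsum_prime_eq_offsetSum hmn]
  linarith [offsetSum_range_thirty_le hm]
end
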